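/- arXiv:1901.06301 — 6 statements merged into one kernel-verified Lean document; each statement's English description precedes it below -/
import Mathlib

section
/- Let r be an odd natural number and let W = {f ∈ V : f(x+y, −x) = −f(x,y)}. Then the dimension of W over ℝ equals (r−1)/3 if r ≡ 1 (mod 6), (r+3)/3 if r ≡ 3 (mod 6), and (r+1)/3 if r ≡ 5 (mod 6). -/
open MvPolynomial

/-- The substitution `(ρ* f)(x,y) = f(x+y, -x)` as a linear endomorphism of `ℝ[x,y]`. -/
noncomputable def rhoStar : MvPolynomial (Fin 2) ℝ →ₗ[ℝ] MvPolynomial (Fin 2) ℝ :=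
  (aeval ![X 0 + X 1, -X 0]).toLinearMap

/-- The subspace `W = {f ∈ V : f(x+y, -x) = -f(x,y)}` of the space `V` of homogeneous
polynomials of degree `r`, i.e. `V ⊓ ker (ρ* + id)`. -/
noncomputable def W (r : ℕ) : Submodule ℝ (MvPolynomial (Fin 2) ℝ) :=
  MvPolynomial.homogeneousSubmodule (Fin 2) ℝ r ⊓ LinearMap.ker (rhoStar + LinearMap.id)


namespace DimW

abbrev Poly := MvPolynomial (Fin 2) ℝ

/-- Homogeneous polynomials are spanned by the monomials `x^i y^j`. -/
lemma hom_le (n : ℕ) (P : Submodule ℝ Poly)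
    (h : ∀ i j : ℕ, i + j = n → (X 0 ^ i * X 1 ^ j : Poly) ∈ P) {f : Poly}
    (hf : f ∈ homogeneousSubmodule (Fin 2) ℝ n) : f ∈ P := by
  rw [f.as_sum]
  refine Submodule.sum_mem _ fun d hd => ?_
  have hdeg : d 0 + d 1 = n := by
    have h1 : d.degree = n := by
      by_contra hne
      exact (mem_support_iff.mp hd) (IsHomogeneous.coeff_eq_zero hf hne)
    rw [← h1, Finsupp.degree_eq_sum, Fin.sum_univ_two]
  have : monomial d (coeff d f) = (coeff d f) • (X 0 ^ d 0 * X 1 ^ d 1 : Poly) := by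
    rw [monomial_eq, smul_eq_C_mul, Finsupp.prod_fintype _ _ (by simp), Fin.prod_univ_two]
  rw [this]
  exact P.smul_mem _ (h _ _ hdeg)

noncomputable def q : Poly := X 0 ^ 2 + X 0 * X 1 + X 1 ^ 2

noncomputable def T : Poly →ₐ[ℝ] Poly := aeval ![X 0 + X 1, -X 0]

lemma T0 : T (X 0) = X 0 + X 1 := by simp [T]
lemma T1 : T (X 1) = -X 0 := by simp [T]

lemma Tq : T q = q := by
  simp only [q, map_add, map_mul, map_pow, T0, T1]; ring

lemma q_ne : q ≠ 0 := by
  intro h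
  have := congrArg (eval ![1, 0]) h
  simp [q] at this

lemma X_hom (i : Fin 2) : (X i : Poly).IsHomogeneous 1 := isHomogeneous_X ℝ i

lemma q_hom : q.IsHomogeneous 2 :=
  (((X_hom 0).pow 2).add ((X_hom 0).mul (X_hom 1))).add ((X_hom 1).pow 2)

lemma mem_W {n : ℕ} {f : Poly} : f ∈ W n ↔ f.IsHomogeneous n ∧ T f = -f := by
  rw [W, Submodule.mem_inf, mem_homogeneousSubmodule, LinearMap.mem_ker]
  refine and_congr Iff.rfl ?_
  rw [eq_neg_iff_add_eq_zero]
  rfl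

noncomputable def z : ℂ := ⟨-1 / 2, √3 / 2⟩

lemma z_im : z.im ≠ 0 := by simp [z]

lemma z_eq : z ^ 2 = -z - 1 := by
  have h3 : √3 * √3 = (3 : ℝ) := Real.mul_self_sqrt (by norm_num)
  apply Complex.ext
  · simp [z, pow_two]; nlinarith
  · simp [z, pow_two]; ring

lemma z3 : z ^ 3 = 1 := by
  linear_combination (z - 1) * z_eq

lemma z_ne1 : z ≠ 1 := by
  intro h; apply z_im; rw [h]; simp

lemma z_ne2 : z ^ 2 ≠ 1 := by
  intro h
  apply z_ne1
  calc z = z * z ^ 2 := by rw [h, mul_one]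
    _ = z ^ 3 := by ring
    _ = 1 := z3

noncomputable def E : Poly →ₐ[ℝ] ℂ := aeval ![z, 1]

lemma E0 : E (X 0) = z := by simp [E]
lemma E1 : E (X 1) = 1 := by simp [E]

lemma Eq0 : E q = 0 := by
  simp only [q, map_add, map_mul, map_pow, E0, E1]; linear_combination z_eq

lemma E_T {n : ℕ} {f : Poly} (hf : f.IsHomogeneous n) : E (T f) = (-z) ^ n * E f := by
  have := hom_le n (LinearMap.ker (E.toLinearMap ∘ₗ T.toLinearMap - ((-z) ^ n) • E.toLinearMap))
    (fun i j hij => by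
      simp only [LinearMap.mem_ker, LinearMap.sub_apply, LinearMap.comp_apply,
        AlgHom.toLinearMap_apply, LinearMap.smul_apply, map_mul, map_pow, T0, T1, map_add, map_neg,
        E0, E1, smul_eq_mul]
      have : z + 1 = (-z) * z := by linear_combination z_eq
      rw [this, mul_pow, ← hij]; ring) (f := f) hf
  simpa [sub_eq_zero] using this

lemma reduce (n : ℕ) {f : Poly} (hf : f.IsHomogeneous (n + 2)) :
    ∃ g : Poly, g.IsHomogeneous n ∧ ∃ a b : ℝ,
      f = q * g + a • (X 0 * X 1 ^ (n + 1)) + b • X 1 ^ (n + 2) := by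
  let A : Submodule ℝ Poly := (homogeneousSubmodule (Fin 2) ℝ n).map (LinearMap.mulLeft ℝ q)
  let B : Submodule ℝ Poly := Submodule.span ℝ {X 0 * X 1 ^ (n + 1), X 1 ^ (n + 2)}
  have key : ∀ i j : ℕ, i + j = n + 2 → (X 0 ^ i * X 1 ^ j : Poly) ∈ A ⊔ B := by
    intro i
    induction i using Nat.strong_induction_on with
    | _ i ih =>
      intro j hij
      match i, ih, hij with
      | 0, _, hij =>
        apply Submodule.mem_sup_right
        apply Submodule.subset_span
        obtain rfl : j = n + 2 := by omega
        simp
      | 1, _, hij =>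
        apply Submodule.mem_sup_right
        apply Submodule.subset_span
        obtain rfl : j = n + 1 := by omega
        simp
      | i + 2, ih, hij =>
        have h1 := ih (i + 1) (by omega) (j + 1) (by omega)
        have h0 := ih i (by omega) (j + 2) (by omega)
        have hA : q * (X 0 ^ i * X 1 ^ j) ∈ A ⊔ B := by
          apply Submodule.mem_sup_left
          refine ⟨X 0 ^ i * X 1 ^ j, ?_, rfl⟩
          have := ((X_hom 0).pow i).mul ((X_hom 1).pow j)
          have e : 1 * i + 1 * j = n := by omega
          rw [e] at this
          exact this
        have e : (X 0 ^ (i + 2) * X 1 ^ j : Poly) = q * (X 0 ^ i * X 1 ^ j)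
            - X 0 ^ (i + 1) * X 1 ^ (j + 1) - X 0 ^ i * X 1 ^ (j + 2) := by
          rw [q]; ring
        rw [e]
        exact Submodule.sub_mem _ (Submodule.sub_mem _ hA h1) h0
  have := hom_le (n + 2) _ key hf
  obtain ⟨u, ⟨g, hg, rfl⟩, v, hv, rfl⟩ := Submodule.mem_sup.mp this
  obtain ⟨a, b, rfl⟩ := Submodule.mem_span_pair.mp hv
  exact ⟨g, hg, a, b, by simp [add_assoc]⟩

lemma ab_zero {a b : ℝ} (h : (a : ℂ) * z + b = 0) : a = 0 ∧ b = 0 := by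
  have h1 := congrArg Complex.im h
  have ha : a = 0 := by simpa [z_im] using h1
  refine ⟨ha, ?_⟩
  simpa [ha] using h

lemma E_ker {n : ℕ} {f : Poly} (hf : f.IsHomogeneous (n + 2)) (h : E f = 0) :
    ∃ g : Poly, g.IsHomogeneous n ∧ f = q * g := by
  obtain ⟨g, hg, a, b, rfl⟩ := reduce n hf
  simp only [map_add, map_mul, map_smul, map_pow, Eq0, E0, E1] at h
  obtain ⟨rfl, rfl⟩ := ab_zero (a := a) (b := b) (by simpa using h)
  exact ⟨g, hg, by simp⟩

lemma E_W {n : ℕ} (hn : Odd n) {f : Poly} (hf : f ∈ W n) : E f = z ^ n * E f := by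
  obtain ⟨h1, h2⟩ := mem_W.mp hf
  have h3 := E_T h1
  rw [h2, map_neg, hn.neg_pow] at h3
  linear_combination -h3

lemma z_pow_ne {n : ℕ} (hn : n % 3 ≠ 0) : z ^ n ≠ 1 := by
  have h : z ^ n = z ^ (n % 3) := by
    conv_lhs => rw [← Nat.div_add_mod n 3, pow_add, pow_mul, z3, one_pow, one_mul]
  rw [h]
  have : n % 3 = 1 ∨ n % 3 = 2 := by omega
  rcases this with h | h <;> rw [h]
  · simpa using z_ne1
  · exact z_ne2

lemma E_W_zero {n : ℕ} (hn : Odd n) (h3 : n % 3 ≠ 0) {f : Poly} (hf : f ∈ W n) : E f = 0 := by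
  have h := E_W hn hf
  have h' : (z ^ n - 1) * E f = 0 := by linear_combination -h
  rcases mul_eq_zero.mp h' with h | h
  · exact absurd (sub_eq_zero.mp h) (z_pow_ne h3)
  · exact h

instance (n : ℕ) : Module.Finite ℝ (W n) := by
  have : Module.Finite ℝ (homogeneousSubmodule (Fin 2) ℝ n) :=
    Module.Finite.iff_fg.mpr (homogeneousSubmodule_fg _ _ n)
  exact Submodule.finiteDimensional_of_le (inf_le_left : W n ≤ homogeneousSubmodule (Fin 2) ℝ n)

lemma q_mul_mem {n : ℕ} {g : Poly} (hg : g ∈ W n) : LinearMap.mulLeft ℝ q g ∈ W (n + 2) := by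
  obtain ⟨h1, h2⟩ := mem_W.mp hg
  refine mem_W.mpr ⟨?_, ?_⟩
  · rw [add_comm]; exact q_hom.mul h1
  · simp [Tq, h2]

noncomputable def M (n : ℕ) : W n →ₗ[ℝ] W (n + 2) :=
  (LinearMap.mulLeft ℝ q).restrict fun _ h => q_mul_mem h

lemma M_inj (n : ℕ) : Function.Injective (M n) := by
  intro a b h
  have := congrArg Subtype.val h
  exact Subtype.ext (mul_left_cancel₀ q_ne this)

noncomputable def EW (n : ℕ) : W n →ₗ[ℝ] ℂ := E.toLinearMap.domRestrict (W n)

lemma range_M (n : ℕ) : LinearMap.range (M n) = LinearMap.ker (EW (n + 2)) := by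
  ext ⟨f, hf⟩
  constructor
  · rintro ⟨g, hg⟩
    have : q * g.1 = f := congrArg Subtype.val hg
    change E f = 0
    rw [← this, map_mul, Eq0, zero_mul]
  · intro h
    have h : E f = 0 := h
    obtain ⟨h1, h2⟩ := mem_W.mp hf
    obtain ⟨g, hg, rfl⟩ := E_ker h1 h
    have hT : T g = -g := by
      rw [map_mul, Tq] at h2
      apply mul_left_cancel₀ q_ne
      rw [h2]; ring
    exact ⟨⟨g, mem_W.mpr ⟨hg, hT⟩⟩, rfl⟩

lemma step (n : ℕ) : Module.finrank ℝ (W (n + 2)) =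
    Module.finrank ℝ (LinearMap.range (EW (n + 2))) + Module.finrank ℝ (W n) := by
  rw [← (EW (n + 2)).finrank_range_add_finrank_ker, ← range_M,
    LinearMap.finrank_range_of_inj (M_inj n)]

lemma range_bot {n : ℕ} (hn : Odd n) (h3 : n % 3 ≠ 0) :
    Module.finrank ℝ (LinearMap.range (EW n)) = 0 := by
  have : EW n = 0 := by
    ext ⟨f, hf⟩ : 1
    exact E_W_zero hn h3 hf
  rw [this, LinearMap.range_zero, finrank_bot]

noncomputable def c1 : Poly := X 0 * X 1 * (X 0 + X 1)
noncomputable def c2 : Poly := X 0 * X 0 * (X 0 + X 1) - (X 0 + X 1) * (X 0 + X 1) * X 1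
  - X 0 * X 1 * X 1

lemma Tc1 : T c1 = -c1 := by
  simp only [c1, map_add, map_mul, T0, T1]; ring
lemma Tc2 : T c2 = -c2 := by
  simp only [c2, map_add, map_sub, map_mul, T0, T1]; ring
lemma Ec1 : E c1 = -1 := by
  simp only [c1, map_add, map_mul, E0, E1]; linear_combination z_eq
lemma Ec2 : E c2 = -3 * z := by
  simp only [c2, map_add, map_sub, map_mul, E0, E1]; linear_combination z3 - z_eq + z_eq
lemma c1_hom : c1.IsHomogeneous 3 :=
  ((X_hom 0).mul (X_hom 1)).mul ((X_hom 0).add (X_hom 1))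
lemma c2_hom : c2.IsHomogeneous 3 := by
  have s := (X_hom 0).add (X_hom 1)
  exact ((((X_hom 0).mul (X_hom 0)).mul s).sub ((s.mul s).mul (X_hom 1))).sub
    (((X_hom 0).mul (X_hom 1)).mul (X_hom 1))

lemma range_top {n : ℕ} (hn : Odd n) (h3 : n % 3 = 0) :
    Module.finrank ℝ (LinearMap.range (EW n)) = 2 := by
  obtain ⟨k, hk⟩ : ∃ k, n = 3 * (2 * k) + 3 := by
    obtain ⟨m, rfl⟩ := hn
    exact ⟨(m - 1) / 3, by omega⟩
  have hmem : ∀ c : Poly, c.IsHomogeneous 3 → T c = -c → c1 ^ (2 * k) * c ∈ W n := by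
    intro c h1 h2
    refine mem_W.mpr ⟨?_, ?_⟩
    · rw [hk]; exact (c1_hom.pow _).mul h1
    · rw [map_mul, map_pow, Tc1, h2, Even.neg_pow (even_two_mul k)]; ring
  have hE : ∀ c, E (c1 ^ (2 * k) * c) = E c := by
    intro c
    rw [map_mul, map_pow, Ec1, Even.neg_pow (even_two_mul k)]; simp
  have : LinearMap.range (EW n) = ⊤ := by
    rw [eq_top_iff]
    rintro w -
    have e1 : (-1 : ℂ) ∈ LinearMap.range (EW n) :=
      ⟨⟨_, hmem c1 c1_hom Tc1⟩, (hE c1).trans Ec1⟩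
    have e2 : (-3 * z : ℂ) ∈ LinearMap.range (EW n) :=
      ⟨⟨_, hmem c2 c2_hom Tc2⟩, (hE c2).trans Ec2⟩
    have : w = (w.im / z.im * z.re - w.re) • (-1 : ℂ) + (-(w.im / z.im) / 3) • (-3 * z : ℂ) := by
      apply Complex.ext
      · simp; ring
      · have := z_im
        simp; field_simp
    rw [this]
    exact Submodule.add_mem _ (Submodule.smul_mem _ _ e1) (Submodule.smul_mem _ _ e2)
  rw [this, finrank_top, Complex.finrank_real_complex]

lemma W_one : Module.finrank ℝ (W 1) = 0 := by
  have : W 1 = ⊥ := by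
    rw [eq_bot_iff]
    intro f hf
    have hE := E_W_zero (by decide) (by decide) hf
    have := hom_le 1 (Submodule.span ℝ {X 0, X 1}) (fun i j hij => by
      apply Submodule.subset_span
      have : (i = 0 ∧ j = 1) ∨ (i = 1 ∧ j = 0) := by omega
      rcases this with ⟨rfl, rfl⟩ | ⟨rfl, rfl⟩ <;> simp) (mem_W.mp hf).1
    obtain ⟨a, b, rfl⟩ := Submodule.mem_span_pair.mp this
    rw [map_add, map_smul, map_smul, E0, E1] at hE
    obtain ⟨rfl, rfl⟩ := ab_zero (a := a) (b := b) (by simpa using hE)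
    simp
  rw [this, finrank_bot]

lemma main (k : ℕ) : Module.finrank ℝ (W (2 * k + 1)) = 2 * ((k + 2) / 3) := by
  induction k with
  | zero => simpa using W_one
  | succ k ih =>
    have e : 2 * (k + 1) + 1 = (2 * k + 1) + 2 := by ring
    have ho : Odd (2 * k + 1 + 2) := ⟨k + 1, by ring⟩
    rw [e, step, ih]
    by_cases h : (2 * k + 1 + 2) % 3 = 0
    · rw [range_top ho h]; omega
    · have hk : k % 3 = 1 ∨ k % 3 = 2 := by omega
      rw [range_bot ho h]
      rcases hk with hk | hk <;> omega

end DimW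

/-- For odd `r`, the dimension of `W = {f ∈ V : f(x+y,-x) = -f(x,y)}` equals
`(r-1)/3` if `r ≡ 1 (mod 6)`, `(r+3)/3` if `r ≡ 3 (mod 6)`, and `(r+1)/3` if
`r ≡ 5 (mod 6)`. -/
theorem dim_W (r : ℕ) (hr : Odd r) :
    (r % 6 = 1 → Module.finrank ℝ ↥(W r) = (r - 1) / 3) ∧
    (r % 6 = 3 → Module.finrank ℝ ↥(W r) = (r + 3) / 3) ∧
    (r % 6 = 5 → Module.finrank ℝ ↥(W r) = (r + 1) / 3) := by
  obtain ⟨k, rfl⟩ := hr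
  rw [DimW.main k]
  refine ⟨fun h => ?_, fun h => ?_, fun h => ?_⟩ <;> omega
end

section
/- Let r be an even natural number. Then the dimension over ℝ of the eigenspace of Φ for the eigenvalue 1 is at least (r−6)/6, (r+4)/6, (r+2)/6, r/6, (r−2)/6, (r+8)/6 according as r ≡ 0, 2, 4, 6, 8, 10 (mod 12); and the dimension of the eigenspace of Φ for the eigenvalue −1 is at least r/6, (r−2)/6, (r+8)/6, (r−6)/6, (r+4)/6, (r+2)/6 according as r ≡ 0, 2, 4, 6, 8, 10 (mod 12). -/
open MvPolynomial

/-- The substitution `(σ* f)(x,y) = f(x+y, y)` as a linear endomorphism of the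
polynomial ring `ℝ[x,y]`. -/
noncomputable def sigmaStar : MvPolynomial (Fin 2) ℝ →ₗ[ℝ] MvPolynomial (Fin 2) ℝ :=
  (aeval ![X 0 + X 1, X 1]).toLinearMap

/-- The substitution `(τ* f)(x,y) = f(x, x+y)` as a linear endomorphism of the
polynomial ring `ℝ[x,y]`. -/
noncomputable def tauStar : MvPolynomial (Fin 2) ℝ →ₗ[ℝ] MvPolynomial (Fin 2) ℝ :=
  (aeval ![X 0, X 0 + X 1]).toLinearMap

/-- The operator `Φ : f(x,y) ↦ f(x+y, y) + f(x, x+y)`.  It preserves the space of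
homogeneous polynomials of each degree `r`. -/
noncomputable def Phi : MvPolynomial (Fin 2) ℝ →ₗ[ℝ] MvPolynomial (Fin 2) ℝ :=
  sigmaStar + tauStar

/-- The eigenspace of `Φ` for the eigenvalue `1`, inside the space `V` of homogeneous
polynomials of degree `r`: `{f ∈ V : Φ f = f}`. -/
noncomputable def eigPlus (r : ℕ) : Submodule ℝ (MvPolynomial (Fin 2) ℝ) :=
  MvPolynomial.homogeneousSubmodule (Fin 2) ℝ r ⊓
    LinearMap.ker (Phi - LinearMap.id)

/-- The eigenspace of `Φ` for the eigenvalue `-1`, inside the space `V` of homogeneous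
polynomials of degree `r`: `{f ∈ V : Φ f = -f}`. -/
noncomputable def eigMinus (r : ℕ) : Submodule ℝ (MvPolynomial (Fin 2) ℝ) :=
  MvPolynomial.homogeneousSubmodule (Fin 2) ℝ r ⊓
    LinearMap.ker (Phi + LinearMap.id)

/-- The kernel of `P` on forms of degree `r`. -/
noncomputable def kerOn (P : MvPolynomial (Fin 2) ℝ →ₗ[ℝ] MvPolynomial (Fin 2) ℝ) (r : ℕ) :
    Submodule ℝ (MvPolynomial (Fin 2) ℝ) :=
  MvPolynomial.homogeneousSubmodule (Fin 2) ℝ r ⊓ LinearMap.ker P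

theorem homog_le_span (r : ℕ) : MvPolynomial.homogeneousSubmodule (Fin 2) ℝ r ≤
    Submodule.span ℝ (Set.range (fun i : Fin (r+1) =>
      (X 0 ^ (i:ℕ) * X 1 ^ (r - i) : MvPolynomial (Fin 2) ℝ))) := by
  intro f hf
  rw [mem_homogeneousSubmodule] at hf
  rw [f.as_sum]
  refine Submodule.sum_mem _ fun d hd => ?_
  have hdeg : d 0 + d 1 = r := by
    have := hf (mem_support_iff.mp hd)
    rw [Finsupp.weight_apply, Finsupp.sum_fintype _ _ (by simp)] at this
    simpa [Fin.sum_univ_two] using this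
  have : monomial d (coeff d f) = coeff d f • (X 0 ^ (d 0) * X 1 ^ (r - d 0) :
      MvPolynomial (Fin 2) ℝ) := by
    rw [monomial_eq, Finsupp.prod_fintype _ _ (by simp), Fin.prod_univ_two, smul_eq_C_mul]
    congr 3
    omega
  rw [this]
  exact Submodule.smul_mem _ _ (Submodule.subset_span ⟨⟨d 0, by omega⟩, rfl⟩)

instance homog_fin (r : ℕ) :
    Module.Finite ℝ (MvPolynomial.homogeneousSubmodule (Fin 2) ℝ r) := by
  have := Module.Finite.span_of_finite ℝ (Set.finite_range (fun i : Fin (r+1) =>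
      (X 0 ^ (i:ℕ) * X 1 ^ (r - i) : MvPolynomial (Fin 2) ℝ)))
  exact Submodule.finiteDimensional_of_le (homog_le_span r)

theorem homog_finrank (r : ℕ) :
    Module.finrank ℝ (MvPolynomial.homogeneousSubmodule (Fin 2) ℝ r) ≤ r + 1 := by
  have := Module.Finite.span_of_finite ℝ (Set.finite_range (fun i : Fin (r+1) =>
      (X 0 ^ (i:ℕ) * X 1 ^ (r - i) : MvPolynomial (Fin 2) ℝ)))
  refine (Submodule.finrank_mono (homog_le_span r)).trans ?_
  refine (finrank_range_le_card _).trans ?_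
  simp

instance kerOn_fin (P) (r : ℕ) : Module.Finite ℝ (kerOn P r) :=
  Submodule.finiteDimensional_of_le (inf_le_left (b := LinearMap.ker P))

theorem kerOn_inf (P Q) (r : ℕ) :
    Module.finrank ℝ (kerOn P r) + Module.finrank ℝ (kerOn Q r) ≤
      Module.finrank ℝ ↥(kerOn P r ⊓ kerOn Q r) + (r + 1) := by
  rw [← Submodule.finrank_sup_add_finrank_inf_eq, add_comm]
  have h : kerOn P r ⊔ kerOn Q r ≤ MvPolynomial.homogeneousSubmodule (Fin 2) ℝ r :=
    sup_le inf_le_left inf_le_left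
  have := (Submodule.finrank_mono h).trans (homog_finrank r)
  omega

theorem kerOn_step0 (P) (r : ℕ) (q : MvPolynomial (Fin 2) ℝ) (hq : q ≠ 0)
    (hq2 : q.IsHomogeneous 2) (hP : ∀ f, P (q * f) = q * P f) :
    Module.finrank ℝ (kerOn P r) ≤ Module.finrank ℝ (kerOn P (r+2)) := by
  let L : kerOn P r →ₗ[ℝ] kerOn P (r+2) :=
    ((LinearMap.mulLeft ℝ q).comp (kerOn P r).subtype).codRestrict _ (by
      rintro ⟨f, hf1, hf2⟩
      refine ⟨?_, ?_⟩
      · have := hq2.mul ((mem_homogeneousSubmodule r f).1 hf1)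
        rw [add_comm] at this
        exact this
      · have h : P f = 0 := hf2
        simp [hP, h])
  refine LinearMap.finrank_le_finrank_of_injective (f := L) ?_
  rw [injective_iff_map_eq_zero]
  rintro ⟨f, hf⟩ h
  have h' : q * f = 0 := congrArg Subtype.val h
  ext1
  simpa [hq] using h'

theorem kerOn_step (P) (r : ℕ) (q : MvPolynomial (Fin 2) ℝ) (hq : q ≠ 0)
    (hq2 : q.IsHomogeneous 2) (hP : ∀ f, P (q * f) = q * P f)
    (z : Fin 2 → ℂ) (hz : aeval z q = 0) (f₁ f₂ : MvPolynomial (Fin 2) ℝ)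
    (h₁ : f₁ ∈ kerOn P (r+2)) (h₂ : f₂ ∈ kerOn P (r+2))
    (hind : ∀ a b : ℝ, (a : ℂ) * aeval z f₁ + b * aeval z f₂ = 0 → a = 0 ∧ b = 0) :
    Module.finrank ℝ (kerOn P r) + 2 ≤ Module.finrank ℝ (kerOn P (r+2)) := by
  let L : (kerOn P r × (ℝ × ℝ)) →ₗ[ℝ] kerOn P (r+2) :=
    (((LinearMap.mulLeft ℝ q).comp (kerOn P r).subtype).coprod
      ((LinearMap.toSpanSingleton ℝ _ f₁).coprod (LinearMap.toSpanSingleton ℝ _ f₂))).codRestrict _ (by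
      rintro ⟨⟨f, hf1, hf2⟩, a, b⟩
      have : q * f ∈ kerOn P (r+2) := by
        refine ⟨?_, ?_⟩
        · have := hq2.mul ((mem_homogeneousSubmodule r f).1 hf1)
          rw [add_comm] at this
          exact this
        · have h : P f = 0 := hf2
          simp [hP, h]
      simpa using Submodule.add_mem _ this
        (Submodule.add_mem _ (Submodule.smul_mem _ a h₁) (Submodule.smul_mem _ b h₂)))
  have hL : Function.Injective L := by
    rw [injective_iff_map_eq_zero]
    rintro ⟨⟨f, hf⟩, a, b⟩ h
    have h' : q * f + (a • f₁ + b • f₂) = 0 := by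
      simpa [L] using congrArg Subtype.val h
    have h2 := congrArg (aeval z) h'
    simp only [map_add, map_mul, hz, map_smul, zero_mul, zero_add, map_zero,
      Complex.real_smul] at h2
    obtain ⟨rfl, rfl⟩ := hind a b h2
    have : f = 0 := by simpa [hq] using h'
    subst this
    rfl
  have := LinearMap.finrank_le_finrank_of_injective hL
  simpa [Module.finrank_prod] using this

/-- `f ↦ f(-y, x)` -/
noncomputable def opS : MvPolynomial (Fin 2) ℝ →ₐ[ℝ] MvPolynomial (Fin 2) ℝ :=
  aeval ![-X 1, X 0]

/-- `f ↦ f(y, -x-y)` -/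
noncomputable def opC : MvPolynomial (Fin 2) ℝ →ₐ[ℝ] MvPolynomial (Fin 2) ℝ :=
  aeval ![X 1, -(X 0 + X 1)]

/-- `f ↦ f(x+y, -x)` -/
noncomputable def opB : MvPolynomial (Fin 2) ℝ →ₐ[ℝ] MvPolynomial (Fin 2) ℝ :=
  aeval ![X 0 + X 1, -X 0]

/-- `1 + S` -/
noncomputable def Pp : MvPolynomial (Fin 2) ℝ →ₗ[ℝ] MvPolynomial (Fin 2) ℝ :=
  LinearMap.id + opS.toLinearMap
/-- `1 - S` -/
noncomputable def Pm : MvPolynomial (Fin 2) ℝ →ₗ[ℝ] MvPolynomial (Fin 2) ℝ :=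
  LinearMap.id - opS.toLinearMap
/-- `1 + C + B` -/
noncomputable def P3 : MvPolynomial (Fin 2) ℝ →ₗ[ℝ] MvPolynomial (Fin 2) ℝ :=
  LinearMap.id + opC.toLinearMap + opB.toLinearMap

theorem sigma_eq (f) : sigmaStar f = opC (opS f) := by
  have : (aeval ![X 0 + X 1, X 1] : MvPolynomial (Fin 2) ℝ →ₐ[ℝ] MvPolynomial (Fin 2) ℝ)
      = opC.comp opS := by
    ext i : 1
    fin_cases i <;> simp [opC, opS]
  exact congrArg (fun g => g f) this

theorem tau_eq (f) : tauStar f = opB (opS f) := by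
  have : (aeval ![X 0, X 0 + X 1] : MvPolynomial (Fin 2) ℝ →ₐ[ℝ] MvPolynomial (Fin 2) ℝ)
      = opB.comp opS := by
    ext i : 1
    fin_cases i <;> simp [opB, opS]
  exact congrArg (fun g => g f) this

theorem le_plus (r : ℕ) : kerOn Pp r ⊓ kerOn P3 r ≤ eigPlus r := by
  rintro f ⟨⟨h, h1⟩, -, h2⟩
  refine ⟨h, ?_⟩
  have h1 : f + opS f = 0 := h1
  have h2 : f + opC f + opB f = 0 := h2
  have h3 : opS f = -f := by linear_combination h1
  change sigmaStar f + tauStar f - f = 0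
  rw [sigma_eq, tau_eq, h3, map_neg, map_neg]
  linear_combination -h2

theorem le_minus (r : ℕ) : kerOn Pm r ⊓ kerOn P3 r ≤ eigMinus r := by
  rintro f ⟨⟨h, h1⟩, -, h2⟩
  refine ⟨h, ?_⟩
  have h1 : f - opS f = 0 := h1
  have h2 : f + opC f + opB f = 0 := h2
  have h3 : opS f = f := by linear_combination -h1
  change sigmaStar f + tauStar f + f = 0
  rw [sigma_eq, tau_eq, h3]
  linear_combination h2

theorem hX (i : Fin 2) (n : ℕ) : (X i ^ n : MvPolynomial (Fin 2) ℝ).IsHomogeneous n := by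
  simpa using (isHomogeneous_X ℝ i).pow n

theorem hXY (i j : Fin 2) (n : ℕ) :
    (X i ^ (n+1) * X j : MvPolynomial (Fin 2) ℝ).IsHomogeneous (n+2) :=
  (hX i (n+1)).mul (isHomogeneous_X ℝ j)

theorem hs2 : (X 0 ^ 2 + X 1 ^ 2 : MvPolynomial (Fin 2) ℝ).IsHomogeneous 2 :=
  (hX 0 2).add (hX 1 2)

theorem hq2 : (X 0 ^ 2 + X 0 * X 1 + X 1 ^ 2 : MvPolynomial (Fin 2) ℝ).IsHomogeneous 2 :=
  ((hX 0 2).add ((isHomogeneous_X ℝ 0).mul (isHomogeneous_X ℝ 1))).add (hX 1 2)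

theorem hs0 : (X 0 ^ 2 + X 1 ^ 2 : MvPolynomial (Fin 2) ℝ) ≠ 0 := by
  intro h
  have := congrArg (aeval (![1, 0] : Fin 2 → ℝ)) h
  simp at this

theorem hq0 : (X 0 ^ 2 + X 0 * X 1 + X 1 ^ 2 : MvPolynomial (Fin 2) ℝ) ≠ 0 := by
  intro h
  have := congrArg (aeval (![1, 0] : Fin 2 → ℝ)) h
  simp at this

theorem hPp (f) : Pp ((X 0 ^ 2 + X 1 ^ 2) * f) = (X 0 ^ 2 + X 1 ^ 2) * Pp f := by
  simp [Pp, opS]; ring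

theorem hPm (f) : Pm ((X 0 ^ 2 + X 1 ^ 2) * f) = (X 0 ^ 2 + X 1 ^ 2) * Pm f := by
  simp [Pm, opS]; ring

theorem hP3 (f) : P3 ((X 0 ^ 2 + X 0 * X 1 + X 1 ^ 2) * f) =
    (X 0 ^ 2 + X 0 * X 1 + X 1 ^ 2) * P3 f := by
  simp [P3, opC, opB]; ring

theorem ind_of (a b : ℝ) (u v : ℂ) (hd : u.re * v.im - u.im * v.re ≠ 0)
    (h : (a : ℂ) * u + b * v = 0) : a = 0 ∧ b = 0 := by
  have h1 := congrArg Complex.re h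
  have h2 := congrArg Complex.im h
  simp at h1 h2
  constructor
  · have : a * (u.re * v.im - u.im * v.re) = 0 := by linear_combination v.im * h1 - v.re * h2
    simpa [hd] using this
  · have : b * (u.re * v.im - u.im * v.re) = 0 := by linear_combination u.re * h2 - u.im * h1
    simpa [hd] using this

theorem dim_Pp (m : ℕ) : 2 * ((m + 1) / 2) ≤ Module.finrank ℝ (kerOn Pp (2 * m)) := by
  induction m with
  | zero => simp
  | succ m ih =>
    have hm : 2 * (m + 1) = 2 * m + 2 := by ring
    rw [hm]
    rcases Nat.even_or_odd' m with ⟨k, rfl | rfl⟩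
    · have := kerOn_step Pp (2 * (2 * k)) _ hs0 hs2 hPp ![1, Complex.I] (by simp)
        (X 0 ^ (2 * (2 * k) + 2) - X 1 ^ (2 * (2 * k) + 2))
        (X 0 ^ (2 * (2 * k) + 1) * X 1 + X 1 ^ (2 * (2 * k) + 1) * X 0)
        ⟨(hX _ _).sub (hX _ _), by
          have e : Even (2 * (2 * k) + 2) := ⟨2 * k + 1, by ring⟩
          simp [Pp, opS, e.neg_pow]⟩
        ⟨(hXY _ _ _).add (hXY _ _ _), by
          have e : Odd (2 * (2 * k) + 1) := ⟨2 * k, by ring⟩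
          simp [Pp, opS, e.neg_pow]⟩
        (by
          intro a b
          apply ind_of
          have e : Complex.I ^ (2 * (2 * k)) = 1 := by
            rw [← mul_assoc, pow_mul]; norm_num [show Complex.I ^ 4 = 1 from Complex.I_pow_four]
          simp [pow_add, e])
      omega
    · have := kerOn_step0 Pp (2 * (2 * k + 1)) _ hs0 hs2 hPp
      omega

theorem dim_Pm (m : ℕ) : 2 * (m / 2) + 1 ≤ Module.finrank ℝ (kerOn Pm (2 * m)) := by
  induction m with
  | zero =>
    have h1 : (1 : MvPolynomial (Fin 2) ℝ) ∈ kerOn Pm (2 * 0) :=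
      ⟨isHomogeneous_one _ _, by simp [Pm]⟩
    have : Nontrivial (kerOn Pm (2 * 0)) :=
      ⟨⟨⟨1, h1⟩, 0, fun h => one_ne_zero (congrArg Subtype.val h)⟩⟩
    have := Module.finrank_pos (R := ℝ) (M := kerOn Pm (2 * 0))
    omega
  | succ m ih =>
    have hm : 2 * (m + 1) = 2 * m + 2 := by ring
    rw [hm]
    rcases Nat.even_or_odd' m with ⟨k, rfl | rfl⟩
    · have := kerOn_step0 Pm (2 * (2 * k)) _ hs0 hs2 hPm
      omega
    · have := kerOn_step Pm (2 * (2 * k + 1)) _ hs0 hs2 hPm ![1, Complex.I] (by simp)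
        (X 0 ^ (2 * (2 * k + 1) + 2) + X 1 ^ (2 * (2 * k + 1) + 2))
        (X 0 ^ (2 * (2 * k + 1) + 1) * X 1 - X 1 ^ (2 * (2 * k + 1) + 1) * X 0)
        ⟨(hX _ _).add (hX _ _), by
          have e : Even (2 * (2 * k + 1) + 2) := ⟨2 * k + 1 + 1, by ring⟩
          simp [Pm, opS, e.neg_pow]; ring⟩
        ⟨(hXY _ _ _).sub (hXY _ _ _), by
          have e : Odd (2 * (2 * k + 1) + 1) := ⟨2 * k + 1, by ring⟩
          simp [Pm, opS, e.neg_pow]; ring⟩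
        (by
          intro a b
          apply ind_of
          have e : Complex.I ^ (2 * (2 * k + 1)) = -1 := by
            rw [pow_mul]; simp [pow_add, pow_mul]
          simp [pow_add, e])
      omega

/-- primitive cube root of unity -/
noncomputable def om : ℂ := ⟨-1/2, Real.sqrt 3 / 2⟩

theorem om_sq : om ^ 2 = -1 - om := by
  have : Real.sqrt 3 * Real.sqrt 3 = 3 := Real.mul_self_sqrt (by norm_num)
  rw [sq]
  apply Complex.ext
  · simp [om]; linarith
  · simp [om]; ring

theorem om_cube : om ^ 3 = 1 := by
  linear_combination (om - 1) * om_sq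

theorem dim_P3 (m : ℕ) : 2 * (m - m / 3) ≤ Module.finrank ℝ (kerOn P3 (2 * m)) := by
  induction m with
  | zero => simp
  | succ m ih =>
    have hm : 2 * (m + 1) = 2 * m + 2 := by ring
    rw [hm]
    by_cases h3 : (m + 1) % 3 = 0
    · have := kerOn_step0 P3 (2 * m) _ hq0 hq2 hP3
      omega
    · have e : Even (2 * m + 2) := ⟨m + 1, by ring⟩
      have hadd : ((X 0 + X 1) ^ (2 * m + 2) : MvPolynomial (Fin 2) ℝ).IsHomogeneous (2 * m + 2) := by
        simpa using ((isHomogeneous_X ℝ (0 : Fin 2)).add (isHomogeneous_X ℝ (1 : Fin 2))).pow (2 * m + 2)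
      have hs : Real.sqrt 3 ≠ 0 := by positivity
      have := kerOn_step P3 (2 * m) _ hq0 hq2 hP3 ![1, om] (by simp [om_sq])
        (X 0 ^ (2 * m + 2) - X 1 ^ (2 * m + 2))
        (X 1 ^ (2 * m + 2) - (X 0 + X 1) ^ (2 * m + 2))
        ⟨(hX _ _).sub (hX _ _), by
          simp [P3, opC, opB, -neg_add_rev, e.neg_pow]⟩
        ⟨(hX _ _).sub hadd, by
          simp [P3, opC, opB, -neg_add_rev, e.neg_pow]
          rw [show (X 1 + -(X 0 + X 1) : MvPolynomial (Fin 2) ℝ) = -X 0 by ring, e.neg_pow, sub_self]⟩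
        (by
          intro a b
          apply ind_of
          have hw : (1 + om) = - om ^ 2 := by rw [om_sq]; ring
          have key : (om ^ (2 * m + 2) = om ^ 2 ∧ (1 + om) ^ (2 * m + 2) = om) ∨
              (om ^ (2 * m + 2) = om ∧ (1 + om) ^ (2 * m + 2) = om ^ 2) := by
            rw [hw, e.neg_pow]
            have : m % 3 = 0 ∨ m % 3 = 1 := by omega
            rcases this with h | h
            · obtain ⟨k, rfl⟩ : ∃ k, m = 3 * k := ⟨m / 3, by omega⟩
              left
              constructor
              · rw [show 2 * (3 * k) + 2 = 3 * (2 * k) + 2 by ring, pow_add, pow_mul, om_cube]; simp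
              · rw [← pow_mul, show 2 * (2 * (3 * k) + 2) = 3 * (4 * k + 1) + 1 by ring, pow_add, pow_mul, om_cube]; simp
            · obtain ⟨k, rfl⟩ : ∃ k, m = 3 * k + 1 := ⟨m / 3, by omega⟩
              right
              constructor
              · rw [show 2 * (3 * k + 1) + 2 = 3 * (2 * k + 1) + 1 by ring, pow_add, pow_mul, om_cube]; simp
              · rw [← pow_mul, show 2 * (2 * (3 * k + 1) + 2) = 3 * (4 * k + 2) + 2 by ring, pow_add, pow_mul, om_cube]; simp
          rcases key with ⟨k1, k2⟩ | ⟨k1, k2⟩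
          · simp [k1, k2, om_sq]
            simp [om]
            ring_nf
            simpa using hs
          · simp [k1, k2, om_sq]
            simp [om]
            ring_nf
            simpa using hs)
      omega

/-- For even `r`, lower bounds on the multiplicities of the eigenvalues `1` and `-1`
of `Φ` on `V`, according to `r mod 12`. -/
theorem dim_eig_Phi (r : ℕ) (hr : Even r) :
    (r % 12 = 0 → ((r : ℤ) - 6) / 6 ≤ (Module.finrank ℝ ↥(eigPlus r) : ℤ)) ∧
    (r % 12 = 2 → ((r : ℤ) + 4) / 6 ≤ (Module.finrank ℝ ↥(eigPlus r) : ℤ)) ∧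
    (r % 12 = 4 → ((r : ℤ) + 2) / 6 ≤ (Module.finrank ℝ ↥(eigPlus r) : ℤ)) ∧
    (r % 12 = 6 → (r : ℤ) / 6 ≤ (Module.finrank ℝ ↥(eigPlus r) : ℤ)) ∧
    (r % 12 = 8 → ((r : ℤ) - 2) / 6 ≤ (Module.finrank ℝ ↥(eigPlus r) : ℤ)) ∧
    (r % 12 = 10 → ((r : ℤ) + 8) / 6 ≤ (Module.finrank ℝ ↥(eigPlus r) : ℤ)) ∧
    (r % 12 = 0 → (r : ℤ) / 6 ≤ (Module.finrank ℝ ↥(eigMinus r) : ℤ)) ∧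
    (r % 12 = 2 → ((r : ℤ) - 2) / 6 ≤ (Module.finrank ℝ ↥(eigMinus r) : ℤ)) ∧
    (r % 12 = 4 → ((r : ℤ) + 8) / 6 ≤ (Module.finrank ℝ ↥(eigMinus r) : ℤ)) ∧
    (r % 12 = 6 → ((r : ℤ) - 6) / 6 ≤ (Module.finrank ℝ ↥(eigMinus r) : ℤ)) ∧
    (r % 12 = 8 → ((r : ℤ) + 4) / 6 ≤ (Module.finrank ℝ ↥(eigMinus r) : ℤ)) ∧
    (r % 12 = 10 → ((r : ℤ) + 2) / 6 ≤ (Module.finrank ℝ ↥(eigMinus r) : ℤ)) := by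
  obtain ⟨m, rfl⟩ := hr
  rw [← two_mul]
  have a1 := dim_Pp m
  have a2 := dim_Pm m
  have a3 := dim_P3 m
  have b1 := kerOn_inf Pp P3 (2 * m)
  have b2 := kerOn_inf Pm P3 (2 * m)
  have : Module.Finite ℝ (eigPlus (2 * m)) :=
    Submodule.finiteDimensional_of_le (S₂ := homogeneousSubmodule (Fin 2) ℝ (2 * m)) inf_le_left
  have : Module.Finite ℝ (eigMinus (2 * m)) :=
    Submodule.finiteDimensional_of_le (S₂ := homogeneousSubmodule (Fin 2) ℝ (2 * m)) inf_le_left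
  have c1 := Submodule.finrank_mono (le_plus (2 * m))
  have c2 := Submodule.finrank_mono (le_minus (2 * m))
  generalize Module.finrank ℝ ↥(eigPlus (2 * m)) = A at *
  generalize Module.finrank ℝ ↥(eigMinus (2 * m)) = B at *
  refine ⟨?_, ?_, ?_, ?_, ?_, ?_, ?_, ?_, ?_, ?_, ?_, ?_⟩ <;> intro h <;> omega
end

section
/- Let r be an even natural number. Then the sum of the dimensions over ℝ of the eigenspaces of Φ for the eigenvalues 1 and −1 is at least (r−3)/3 if r ≡ 0 (mod 6), at least (r+1)/3 if r ≡ 2 (mod 6), and at least (r+5)/3 if r ≡ 4 (mod 6). -/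
open MvPolynomial

/-- `f(-y, x)` -/
noncomputable def sS : MvPolynomial (Fin 2) ℝ →ₐ[ℝ] MvPolynomial (Fin 2) ℝ :=
  aeval ![-X 1, X 0]

/-- `f(-y, x+y)` -/
noncomputable def sU : MvPolynomial (Fin 2) ℝ →ₐ[ℝ] MvPolynomial (Fin 2) ℝ :=
  aeval ![-X 1, X 0 + X 1]

/-- `f(-x-y, x)` -/
noncomputable def sW : MvPolynomial (Fin 2) ℝ →ₐ[ℝ] MvPolynomial (Fin 2) ℝ :=
  aeval ![-X 0 - X 1, X 0]

/-- `f(-x, -y)` -/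
noncomputable def sN : MvPolynomial (Fin 2) ℝ →ₐ[ℝ] MvPolynomial (Fin 2) ℝ :=
  aeval ![-X 0, -X 1]

lemma sU_sU (f : MvPolynomial (Fin 2) ℝ) : sU (sU f) = sW f := by
  have : sU.comp sU = sW := by
    ext i : 1
    fin_cases i
    · simp [sU, sW]; ring
    · simp [sU, sW]
  exact DFunLike.congr_fun this f

lemma sW_sU (f : MvPolynomial (Fin 2) ℝ) : sW (sU f) = sN f := by
  have : sW.comp sU = sN := by
    ext i : 1
    fin_cases i
    · simp [sU, sW, sN]
    · simp [sU, sW, sN]; ring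
  exact DFunLike.congr_fun this f

lemma sS_sS (f : MvPolynomial (Fin 2) ℝ) : sS (sS f) = sN f := by
  have : sS.comp sS = sN := by
    ext i : 1
    fin_cases i
    · simp [sS, sN]
    · simp [sS, sN]
  exact DFunLike.congr_fun this f

lemma sigma_sS (f : MvPolynomial (Fin 2) ℝ) : sigmaStar (sS f) = sU f := by
  have : (aeval ![X 0 + X 1, X 1] : MvPolynomial (Fin 2) ℝ →ₐ[ℝ] MvPolynomial (Fin 2) ℝ).comp sS
      = sU := by
    ext i : 1
    fin_cases i
    · simp [sS, sU]
    · simp [sS, sU]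
  exact DFunLike.congr_fun this f

lemma tau_sS (f : MvPolynomial (Fin 2) ℝ) : tauStar (sS f) = sW f := by
  have : (aeval ![X 0, X 0 + X 1] : MvPolynomial (Fin 2) ℝ →ₐ[ℝ] MvPolynomial (Fin 2) ℝ).comp sS
      = sW := by
    ext i : 1
    fin_cases i
    · simp [sS, sW]; ring
    · simp [sS, sW]
  exact DFunLike.congr_fun this f

lemma hom_le_span (r : ℕ) : homogeneousSubmodule (Fin 2) ℝ r ≤
    Submodule.span ℝ (Set.range fun i : Fin (r + 1) =>
      (X 0 ^ (i : ℕ) * X 1 ^ (r - i) : MvPolynomial (Fin 2) ℝ)) := by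
  intro f hf
  rw [mem_homogeneousSubmodule] at hf
  rw [f.as_sum]
  refine Submodule.sum_mem _ fun d hd => ?_
  have h := hf (mem_support_iff.mp hd)
  rw [Finsupp.weight_apply, Finsupp.sum_fintype _ _ (by simp)] at h
  simp [Fin.sum_univ_two] at h
  have : monomial d (coeff d f) =
      (coeff d f) • (X 0 ^ (d 0) * X 1 ^ (r - d 0) : MvPolynomial (Fin 2) ℝ) := by
    rw [monomial_eq, Finsupp.prod_fintype _ _ (by simp), Fin.prod_univ_two, smul_eq_C_mul,
      show r - d 0 = d 1 by omega]
  rw [this]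
  exact Submodule.smul_mem _ _ (Submodule.subset_span ⟨⟨d 0, by omega⟩, rfl⟩)

instance hom_fin (r : ℕ) : Module.Finite ℝ (homogeneousSubmodule (Fin 2) ℝ r) := by
  have : Module.Finite ℝ (Submodule.span ℝ (Set.range fun i : Fin (r + 1) =>
      (X 0 ^ (i : ℕ) * X 1 ^ (r - i) : MvPolynomial (Fin 2) ℝ))) :=
    Module.Finite.span_of_finite ℝ (Set.finite_range _)
  exact Submodule.finiteDimensional_of_le (hom_le_span r)

lemma hom_finrank (r : ℕ) : Module.finrank ℝ (homogeneousSubmodule (Fin 2) ℝ r) ≤ r + 1 := by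
  have : Module.Finite ℝ (Submodule.span ℝ (Set.range fun i : Fin (r + 1) =>
      (X 0 ^ (i : ℕ) * X 1 ^ (r - i) : MvPolynomial (Fin 2) ℝ))) :=
    Module.Finite.span_of_finite ℝ (Set.finite_range _)
  refine (Submodule.finrank_mono (hom_le_span r)).trans ?_
  refine (finrank_range_le_card _).trans ?_
  simp

lemma sN_eq {r : ℕ} (hr : Even r) {f : MvPolynomial (Fin 2) ℝ} (hf : f.IsHomogeneous r) :
    sN f = f := by
  have h : Submodule.span ℝ (Set.range fun i : Fin (r + 1) =>
      (X 0 ^ (i : ℕ) * X 1 ^ (r - i) : MvPolynomial (Fin 2) ℝ)) ≤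
      LinearMap.ker (sN.toLinearMap - LinearMap.id) := by
    rw [Submodule.span_le]
    rintro _ ⟨i, rfl⟩
    have hi : (i : ℕ) + (r - i) = r := by omega
    simp only [SetLike.mem_coe, LinearMap.mem_ker, LinearMap.sub_apply, AlgHom.toLinearMap_apply,
      LinearMap.id_apply, sN, map_mul, map_pow, aeval_X]
    simp only [Matrix.cons_val_zero, Matrix.cons_val_one]
    rw [neg_pow, neg_pow (X 1 : MvPolynomial (Fin 2) ℝ), mul_mul_mul_comm, ← pow_add, hi, hr.neg_one_pow, one_mul, sub_self]
  have := h (hom_le_span r hf)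
  simpa [sub_eq_zero] using this

lemma hom_aeval {r : ℕ} {f : MvPolynomial (Fin 2) ℝ} (hf : f.IsHomogeneous r)
    (g : Fin 2 → MvPolynomial (Fin 2) ℝ) (hg : ∀ i, (g i).IsHomogeneous 1) :
    (aeval g f).IsHomogeneous r := by
  simpa using hf.aeval (n := 1) g hg

lemma sU_hom {r : ℕ} {f : MvPolynomial (Fin 2) ℝ} (hf : f.IsHomogeneous r) :
    (sU f).IsHomogeneous r := by
  refine hom_aeval hf _ fun i => ?_
  fin_cases i
  · exact (isHomogeneous_X _ _).neg
  · exact (isHomogeneous_X _ _).add (isHomogeneous_X _ _)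

lemma sS_hom {r : ℕ} {f : MvPolynomial (Fin 2) ℝ} (hf : f.IsHomogeneous r) :
    (sS f).IsHomogeneous r := by
  refine hom_aeval hf _ fun i => ?_
  fin_cases i
  · exact (isHomogeneous_X _ _).neg
  · exact (isHomogeneous_X _ _)

/-- kernel of `1 + U + U^2` on degree `r` -/
noncomputable def KK (r : ℕ) : Submodule ℝ (MvPolynomial (Fin 2) ℝ) :=
  homogeneousSubmodule (Fin 2) ℝ r ⊓
    LinearMap.ker (LinearMap.id + sU.toLinearMap + sW.toLinearMap)

lemma mem_KK {r : ℕ} {f : MvPolynomial (Fin 2) ℝ} :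
    f ∈ KK r ↔ f.IsHomogeneous r ∧ f + sU f + sW f = 0 := by
  simp [KK, Submodule.mem_inf]

instance KK_fin (r : ℕ) : Module.Finite ℝ (KK r) :=
  Submodule.finiteDimensional_of_le (inf_le_left : KK r ≤ homogeneousSubmodule (Fin 2) ℝ r)

lemma sub_sU_mem {r : ℕ} (hr : Even r) {f : MvPolynomial (Fin 2) ℝ} (hf : f.IsHomogeneous r) :
    f - sU f ∈ KK r := by
  rw [mem_KK]
  refine ⟨hf.sub (sU_hom hf), ?_⟩
  rw [map_sub, map_sub, sU_sU, sW_sU, sN_eq hr hf]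
  ring

/-- the invariant quadratic form -/
noncomputable def qq : MvPolynomial (Fin 2) ℝ := X 0 ^ 2 + X 0 * X 1 + X 1 ^ 2

lemma qq_hom : qq.IsHomogeneous 2 := by
  have h0 := isHomogeneous_X ℝ (0 : Fin 2)
  have h1 := isHomogeneous_X ℝ (1 : Fin 2)
  exact ((h0.pow 2).add (h0.mul h1)).add (h1.pow 2)

lemma sU_qq : sU qq = qq := by simp [sU, qq]; ring
lemma sW_qq : sW qq = qq := by rw [← sU_sU, sU_qq, sU_qq]

lemma qq_mul_mem {r : ℕ} {f : MvPolynomial (Fin 2) ℝ} (hf : f ∈ KK r) : qq * f ∈ KK (r + 2) := by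
  rw [mem_KK] at *
  refine ⟨by simpa [add_comm] using qq_hom.mul hf.1, ?_⟩
  rw [map_mul, map_mul, sU_qq, sW_qq, ← mul_add, ← mul_add, hf.2, mul_zero]

lemma exists_zeta : ∃ z : ℂ, z ^ 2 = z - 1 ∧ z.im ≠ 0 := by
  refine ⟨⟨1 / 2, Real.sqrt 3 / 2⟩, ?_, ?_⟩
  · have h : Real.sqrt 3 * Real.sqrt 3 = 3 := Real.mul_self_sqrt (by norm_num)
    apply Complex.ext
    · simp [pow_two]; nlinarith
    · simp [pow_two]; ring
  · simp

lemma zeta_pow {z : ℂ} (hz : z ^ 2 = z - 1) (hi : z.im ≠ 0) {r : ℕ} (hr : Even r)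
    (h6 : r % 6 ≠ 0) : z ^ r ≠ 1 := by
  have h3 : z ^ 3 = -1 := by linear_combination (z + 1) * hz
  have h6' : z ^ 6 = 1 := by rw [show 6 = 3 * 2 by rfl, pow_mul, h3]; norm_num
  rw [← Nat.div_add_mod r 6, pow_add, pow_mul, h6', one_pow, one_mul]
  have : r % 6 = 2 ∨ r % 6 = 4 := by
    obtain ⟨k, rfl⟩ := hr; omega
  intro h
  apply hi
  rcases this with h' | h' <;> rw [h'] at h
  · have : z = 2 := by linear_combination h - hz
    simp [this]
  · have : z = -1 := by linear_combination h3 * z - h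
    simp [this]

/-- evaluation at an eigenvector of `U` -/
noncomputable def ev (z : ℂ) : MvPolynomial (Fin 2) ℝ →ₐ[ℝ] ℂ := aeval ![1, -z]

lemma KK_qq_le {z : ℂ} (hz : z ^ 2 = z - 1) (r : ℕ) :
    Module.finrank ℝ (KK r) ≤
      Module.finrank ℝ (LinearMap.ker ((ev z).toLinearMap.domRestrict (KK (r + 2)))) := by
  have hq : qq ≠ 0 := by
    intro h
    have := congrArg (eval ![1, 0]) h
    simp [qq] at this
  have he : ev z qq = 0 := by
    simp [ev, qq]; linear_combination hz
  let g : KK r →ₗ[ℝ] LinearMap.ker ((ev z).toLinearMap.domRestrict (KK (r + 2))) :=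
    { toFun := fun f => ⟨⟨qq * f, qq_mul_mem f.2⟩, by simp [he]⟩
      map_add' := fun a b => by ext1; ext1; simp [mul_add]
      map_smul' := fun a b => by ext1; ext1; simp }
  refine LinearMap.finrank_le_finrank_of_injective (f := g) ?_
  intro a b hab
  have : qq * (a : MvPolynomial (Fin 2) ℝ) = qq * b := 
    congrArg (fun t : LinearMap.ker ((ev z).toLinearMap.domRestrict (KK (r + 2))) =>
      ((t : KK (r + 2)) : MvPolynomial (Fin 2) ℝ)) hab
  exact Subtype.ext (mul_left_cancel₀ hq this)

lemma ev_surj {z : ℂ} (hz : z ^ 2 = z - 1) (hi : z.im ≠ 0) {r : ℕ} (hr : Even (r + 2))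
    (h6 : (r + 2) % 6 ≠ 0) :
    LinearMap.range ((ev z).toLinearMap.domRestrict (KK (r + 2))) = ⊤ := by
  have hc := zeta_pow hz hi hr h6
  set c : ℂ := 1 - z ^ (r + 2) with hcdef
  have hc0 : c ≠ 0 := sub_ne_zero.mpr hc.symm
  have h0 := isHomogeneous_X ℝ (0 : Fin 2)
  have h1 := isHomogeneous_X ℝ (1 : Fin 2)
  have m1 := sub_sU_mem hr (f := X 0 ^ (r + 2)) (by simpa using h0.pow (r + 2))
  have m2 := sub_sU_mem hr (f := X 0 ^ (r + 1) * X 1) (by simpa using (h0.pow (r + 1)).mul h1)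
  have e1 : ev z (X 0 ^ (r + 2) - sU (X 0 ^ (r + 2))) = c := by
    simp [ev, sU, c]
  have e2 : ev z (X 0 ^ (r + 1) * X 1 - sU (X 0 ^ (r + 1) * X 1)) = - z * c := by
    simp [ev, sU, c]
    linear_combination -z ^ (r + 1) * hz
  rw [eq_top_iff]
  intro w _
  set u := w / c
  let b : ℝ := u.im / z.im
  let a : ℝ := u.re - b * z.re
  have hu : u = a + b * z := by
    apply Complex.ext
    · simp [a]
    · simp [a, b]; field_simp
  refine ⟨a • ⟨_, m1⟩ - b • ⟨_, m2⟩, ?_⟩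
  rw [map_sub, map_smul, map_smul]
  simp only [LinearMap.domRestrict_apply, AlgHom.toLinearMap_apply]
  rw [e1, e2]
  have : w = u * c := by simp [u, hc0]
  rw [this, hu]
  simp; ring

lemma KK_step (r : ℕ) (hr : Even r) :
    Module.finrank ℝ (KK r) + (if (r + 2) % 6 = 0 then 0 else 2) ≤
      Module.finrank ℝ (KK (r + 2)) := by
  obtain ⟨z, hz, hi⟩ := exists_zeta
  have h1 := KK_qq_le hz r
  have h2 := LinearMap.finrank_range_add_finrank_ker ((ev z).toLinearMap.domRestrict (KK (r + 2)))
  split_ifs with h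
  · omega
  · rw [ev_surj hz hi (by simpa [parity_simps] using hr) h, finrank_top,
      Complex.finrank_real_complex] at h2
    omega

lemma KK_bound (k : ℕ) : 2 * k ≤
    Module.finrank ℝ (KK (2 * k)) + 2 * (k / 3) := by
  induction k with
  | zero => simp
  | succ k ih =>
    have := KK_step (2 * k) (even_two_mul k)
    rw [show 2 * (k + 1) = 2 * k + 2 by ring]
    split_ifs at this <;> omega

lemma mem_plus {r : ℕ} {f : MvPolynomial (Fin 2) ℝ} (hf : f ∈ KK r) (h : sS f = -f) :
    f ∈ eigPlus r := by
  rw [mem_KK] at hf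
  refine Submodule.mem_inf.mpr ⟨hf.1, ?_⟩
  have h1 := sigma_sS f
  have h2 := tau_sS f
  rw [h, map_neg] at h1 h2
  simp only [LinearMap.mem_ker, Phi, LinearMap.sub_apply, LinearMap.add_apply, LinearMap.id_apply]
  linear_combination -h1 - h2 - hf.2

lemma mem_minus {r : ℕ} {f : MvPolynomial (Fin 2) ℝ} (hf : f ∈ KK r) (h : sS f = f) :
    f ∈ eigMinus r := by
  rw [mem_KK] at hf
  refine Submodule.mem_inf.mpr ⟨hf.1, ?_⟩
  have h1 := sigma_sS f
  have h2 := tau_sS f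
  rw [h] at h1 h2
  simp only [LinearMap.mem_ker, Phi, LinearMap.add_apply, LinearMap.id_apply]
  linear_combination h1 + h2 + hf.2

instance eigPlus_fin (r : ℕ) : Module.Finite ℝ (eigPlus r) :=
  Submodule.finiteDimensional_of_le (inf_le_left : eigPlus r ≤ homogeneousSubmodule (Fin 2) ℝ r)

instance eigMinus_fin (r : ℕ) : Module.Finite ℝ (eigMinus r) :=
  Submodule.finiteDimensional_of_le (inf_le_left : eigMinus r ≤ homogeneousSubmodule (Fin 2) ℝ r)

lemma main_bound (r : ℕ) (hr : Even r) : 2 * Module.finrank ℝ (KK r) ≤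
    Module.finrank ℝ (eigPlus r) + Module.finrank ℝ (eigMinus r) + (r + 1) := by
  let A : KK r →ₗ[ℝ] MvPolynomial (Fin 2) ℝ :=
    (LinearMap.id + sS.toLinearMap).domRestrict (KK r)
  let B : KK r →ₗ[ℝ] MvPolynomial (Fin 2) ℝ :=
    (LinearMap.id - sS.toLinearMap).domRestrict (KK r)
  have hA := LinearMap.finrank_range_add_finrank_ker A
  have hB := LinearMap.finrank_range_add_finrank_ker B
  have kA : Module.finrank ℝ (LinearMap.ker A) ≤ Module.finrank ℝ (eigPlus r) := by
    rw [← Submodule.finrank_map_subtype_eq]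
    apply Submodule.finrank_mono
    rintro _ ⟨f, hf, rfl⟩
    have : (f : MvPolynomial (Fin 2) ℝ) + sS f = 0 := hf
    exact mem_plus f.2 (by rw [Submodule.subtype_apply]; linear_combination this)
  have kB : Module.finrank ℝ (LinearMap.ker B) ≤ Module.finrank ℝ (eigMinus r) := by
    rw [← Submodule.finrank_map_subtype_eq]
    apply Submodule.finrank_mono
    rintro _ ⟨f, hf, rfl⟩
    have : (f : MvPolynomial (Fin 2) ℝ) - sS f = 0 := hf
    exact mem_minus f.2 (by rw [Submodule.subtype_apply]; linear_combination -this)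
  have hsum := Submodule.finrank_sup_add_finrank_inf_eq (LinearMap.range A) (LinearMap.range B)
  have hinf : LinearMap.range A ⊓ LinearMap.range B = ⊥ := by
    rw [eq_bot_iff]
    rintro g ⟨⟨a, ha⟩, ⟨b, hb⟩⟩
    have ha' : (a : MvPolynomial (Fin 2) ℝ) + sS a = g := ha
    have hb' : (b : MvPolynomial (Fin 2) ℝ) - sS b = g := hb
    have ea : sS g = g := by
      rw [← ha', map_add, sS_sS, sN_eq hr (mem_KK.mp a.2).1]; ring
    have eb : sS g = -g := by
      rw [← hb', map_sub, sS_sS, sN_eq hr (mem_KK.mp b.2).1]; ring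
    have h2 : (2 : ℝ) • g = 0 := by
      rw [two_smul]; linear_combination eb - ea
    simpa using h2
  have hle : LinearMap.range A ⊔ LinearMap.range B ≤ homogeneousSubmodule (Fin 2) ℝ r := by
    refine sup_le ?_ ?_
    · rintro _ ⟨a, rfl⟩
      have h := (mem_KK.mp a.2).1
      exact h.add (sS_hom h)
    · rintro _ ⟨a, rfl⟩
      have h := (mem_KK.mp a.2).1
      exact h.sub (sS_hom h)
  have := Submodule.finrank_mono hle
  have := hom_finrank r
  rw [hinf, finrank_bot] at hsum
  omega

/-- For even `r`, the sum of the dimensions of the eigenspaces of `Φ` on `V` for the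
eigenvalues `1` and `-1` is at least `(r-3)/3` if `r ≡ 0 (mod 6)`, at least `(r+1)/3`
if `r ≡ 2 (mod 6)`, and at least `(r+5)/3` if `r ≡ 4 (mod 6)`. -/
theorem dim_eig_Phi_sum (r : ℕ) (hr : Even r) :
    (r % 6 = 0 → ((r : ℤ) - 3) / 3 ≤
      ((Module.finrank ℝ ↥(eigPlus r) + Module.finrank ℝ ↥(eigMinus r) : ℕ) : ℤ)) ∧
    (r % 6 = 2 → ((r : ℤ) + 1) / 3 ≤
      ((Module.finrank ℝ ↥(eigPlus r) + Module.finrank ℝ ↥(eigMinus r) : ℕ) : ℤ)) ∧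
    (r % 6 = 4 → ((r : ℤ) + 5) / 3 ≤
      ((Module.finrank ℝ ↥(eigPlus r) + Module.finrank ℝ ↥(eigMinus r) : ℕ) : ℤ)) := by
  obtain ⟨k, hk⟩ := hr
  have hk' : r = 2 * k := by omega
  have h1 := main_bound r ⟨k, hk⟩
  have h2 := KK_bound k
  rw [← hk'] at h2
  refine ⟨fun h => ?_, fun h => ?_, fun h => ?_⟩ <;> omega
end

section
/- Let r be an even natural number. Then the dimension over ℝ of the eigenspace of Φ_sym for the eigenvalue 1 is at least (r−12)/12, (r−2)/12, (r−4)/12, (r−6)/12, (r−8)/12, (r+2)/12 according as r ≡ 0, 2, 4, 6, 8, 10 (mod 12); and the dimension of the eigenspace of Φ_sym for the eigenvalue −1 is at least r/12, (r−2)/12, (r+8)/12, (r−6)/12, (r+4)/12, (r+2)/12 according as r ≡ 0, 2, 4, 6, 8, 10 (mod 12). -/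
open MvPolynomial

/-- The swap substitution `f(x,y) ↦ f(y,x)` as a linear endomorphism. -/
noncomputable def swapStar : MvPolynomial (Fin 2) ℝ →ₗ[ℝ] MvPolynomial (Fin 2) ℝ :=
  (aeval ![X 1, X 0]).toLinearMap

/-- The space `V` of homogeneous polynomials of degree `r` in two variables. -/
noncomputable abbrev V (r : ℕ) : Submodule ℝ (MvPolynomial (Fin 2) ℝ) :=
  MvPolynomial.homogeneousSubmodule (Fin 2) ℝ r

/-- The subspace of `V` spanned by all polynomials of the form `f(x,y) - f(y,x)`. -/
noncomputable def K (r : ℕ) : Submodule ℝ ↥(V r) :=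
  Submodule.span ℝ
    {g : ↥(V r) | ∃ f : ↥(V r),
      (g : MvPolynomial (Fin 2) ℝ) = (f : MvPolynomial (Fin 2) ℝ) - swapStar f}


/-- third linear form -/
noncomputable def zz : MvPolynomial (Fin 2) ℝ := -(X 0 + X 1)
noncomputable def ee2 : MvPolynomial (Fin 2) ℝ := X 0 * X 1 + X 1 * zz + zz * X 0
noncomputable def ee3 : MvPolynomial (Fin 2) ℝ := X 0 * X 1 * zz
noncomputable def pps (n : ℕ) : MvPolynomial (Fin 2) ℝ := X 0 ^ n + X 1 ^ n + zz ^ n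

/-- weighted span of monomials in `ee2`, `ee3`. -/
noncomputable def EE (n : ℕ) : Submodule ℝ (MvPolynomial (Fin 2) ℝ) :=
  Submodule.span ℝ {p | ∃ i j : ℕ, 2 * i + 3 * j = n ∧ p = ee2 ^ i * ee3 ^ j}

lemma mem_EE (i j : ℕ) : ee2 ^ i * ee3 ^ j ∈ EE (2 * i + 3 * j) :=
  Submodule.subset_span ⟨i, j, rfl, rfl⟩

lemma EE_mul {a b : ℕ} {p q : MvPolynomial (Fin 2) ℝ} (hp : p ∈ EE a) (hq : q ∈ EE b) :
    p * q ∈ EE (a + b) := by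
  have h : EE a * EE b ≤ EE (a + b) := by
    unfold EE
    rw [Submodule.span_mul_span]
    apply Submodule.span_mono
    rintro _ ⟨_, ⟨i, j, hij, rfl⟩, _, ⟨k, l, hkl, rfl⟩, rfl⟩
    exact ⟨i + k, j + l, by omega, by ring⟩
  exact h (Submodule.mul_mem_mul hp hq)

lemma pps_mem : ∀ n : ℕ, pps n ∈ EE n
  | 0 => by
    have h : pps 0 = (3 : ℝ) • (ee2 ^ 0 * ee3 ^ 0) := by
      simp only [pps, pow_zero, mul_one, Algebra.smul_def, map_ofNat]; norm_num
    rw [h]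
    exact Submodule.smul_mem _ _ (mem_EE 0 0)
  | 1 => by
    have h : pps 1 = 0 := by simp only [pps, zz]; ring
    rw [h]; exact Submodule.zero_mem _
  | 2 => by
    have h : pps 2 = (-2 : ℝ) • (ee2 ^ 1 * ee3 ^ 0) := by
      simp only [Algebra.smul_def, map_neg, map_ofNat, pps, ee2, zz]; ring
    rw [h]
    exact Submodule.smul_mem _ _ (mem_EE 1 0)
  | n + 3 => by
    have h : pps (n + 3) = ee3 * pps n - ee2 * pps (n + 1) := by
      simp only [pps, ee2, ee3, zz]; ring
    have h2 : ee2 ∈ EE 2 := by simpa using mem_EE 1 0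
    have h3 : ee3 ∈ EE 3 := by simpa using mem_EE 0 1
    rw [h]
    refine Submodule.sub_mem _ ?_ ?_
    · have := EE_mul h3 (pps_mem n)
      rwa [add_comm] at this
    · have := EE_mul h2 (pps_mem (n + 1))
      rwa [show 2 + (n + 1) = n + 3 by ring] at this

lemma zz_hom : zz.IsHomogeneous 1 :=
  ((isHomogeneous_X _ _).add (isHomogeneous_X _ _)).neg

lemma ee2_hom : ee2.IsHomogeneous 2 :=
  (((isHomogeneous_X _ _).mul (isHomogeneous_X _ _)).add
    ((isHomogeneous_X _ _).mul zz_hom)).add (zz_hom.mul (isHomogeneous_X _ _))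

lemma ee3_hom : ee3.IsHomogeneous 3 :=
  ((isHomogeneous_X _ _).mul (isHomogeneous_X _ _)).mul zz_hom

lemma mon_hom (a b : ℕ) : (X 0 ^ a * X 1 ^ b : MvPolynomial (Fin 2) ℝ).IsHomogeneous (a + b) := by
  simpa using ((isHomogeneous_X ℝ (0 : Fin 2)).pow a).mul ((isHomogeneous_X ℝ (1 : Fin 2)).pow b)

lemma EE_gen_hom (i j : ℕ) : (ee2 ^ i * ee3 ^ j).IsHomogeneous (2 * i + 3 * j) :=
  (ee2_hom.pow i).mul (ee3_hom.pow j)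

lemma coeff_mon (a b c d : ℕ) :
    coeff (Finsupp.single 0 c + Finsupp.single 1 d) (X 0 ^ a * X 1 ^ b : MvPolynomial (Fin 2) ℝ)
      = if a = c ∧ b = d then 1 else 0 := by
  rw [X_pow_eq_monomial, X_pow_eq_monomial, monomial_mul, coeff_monomial, one_mul]
  congr 1
  rw [eq_iff_iff, Finsupp.ext_iff]
  simp [Fin.forall_fin_two]

lemma swap_hom {r : ℕ} (f : MvPolynomial (Fin 2) ℝ) (hf : f.IsHomogeneous r) :
    (swapStar f).IsHomogeneous r := by
  have := hf.aeval ![X 1, X 0] (n := 1) (S := ℝ) (σ := Fin 2) (τ := Fin 2) (by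
    intro i; fin_cases i <;> exact isHomogeneous_X _ _)
  rw [one_mul] at this
  exact this

lemma key (a b : ℕ) (s : ℝ) (ha : (-1) ^ a = s) (hb : (-1) ^ b = s) :
    let f : MvPolynomial (Fin 2) ℝ := X 0 ^ a * X 1 ^ b
    let q := Phi f + s • f
    q + swapStar q = s • (pps a * pps b - pps (a + b)) := by
  intro f q
  have h : Phi f + s • f = s • (zz ^ a * X 1 ^ b + X 0 ^ a * zz ^ b + X 0 ^ a * X 1 ^ b) := by
    simp only [f, Phi, sigmaStar, tauStar, LinearMap.add_apply, AlgHom.toLinearMap_apply, map_mul,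
      map_pow, aeval_X, Matrix.cons_val_zero, Matrix.cons_val_one, smul_add, zz, neg_pow (X 0 + X 1 : MvPolynomial (Fin 2) ℝ) ]
    have h1 : (-1 : MvPolynomial (Fin 2) ℝ) ^ a = C s := by rw [← ha]; simp
    have h2 : (-1 : MvPolynomial (Fin 2) ℝ) ^ b = C s := by rw [← hb]; simp
    have h3 : (C s * C s : MvPolynomial (Fin 2) ℝ) = 1 := by
      rw [← C_mul, ← ha, ← mul_pow]; simp
    rw [h1, h2]
    simp only [smul_eq_C_mul]
    linear_combination (-(X 0 + X 1) ^ a * X 1 ^ b - X 0 ^ a * (X 0 + X 1) ^ b) * h3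
  simp only [q]
  rw [h, map_smul, ← smul_add]
  congr 1
  simp only [swapStar, AlgHom.toLinearMap_apply, map_add, map_mul,
      map_pow, aeval_X, Matrix.cons_val_zero, Matrix.cons_val_one, zz, map_neg, pps]
  ring

lemma swap_sub_mem {r : ℕ} (q q' : ↥(V r)) (h : (q' : MvPolynomial (Fin 2) ℝ) = swapStar q) :
    (Submodule.Quotient.mk q' : ↥(V r) ⧸ K r) = Submodule.Quotient.mk q := by
  symm
  rw [Submodule.Quotient.eq]
  exact Submodule.subset_span ⟨q, by simp [h]⟩

lemma swapStar_coeff (c d : ℕ) (f : MvPolynomial (Fin 2) ℝ) :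
    coeff (Finsupp.single 0 c + Finsupp.single 1 d) (swapStar f) =
      coeff (Finsupp.single 0 d + Finsupp.single 1 c) f := by
  induction f using MvPolynomial.induction_on' with
  | monomial u a =>
    have h : monomial u a = a • (X 0 ^ (u 0) * X 1 ^ (u 1) : MvPolynomial (Fin 2) ℝ) := by
      rw [monomial_eq, smul_eq_C_mul, Finsupp.prod_fintype _ _ (by simp)]
      simp
    rw [h, map_smul, coeff_smul, coeff_smul, coeff_mon]
    have h2 : swapStar (X 0 ^ (u 0) * X 1 ^ (u 1) : MvPolynomial (Fin 2) ℝ)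
        = X 0 ^ (u 1) * X 1 ^ (u 0) := by
      simp [swapStar, mul_comm]
    rw [h2, coeff_mon]
    simp only [and_comm]
  | add p q hp hq => simp [hp, hq]

/-- symmetrized coefficient functional on the quotient -/
noncomputable def symCoeff (r c d : ℕ) : (↥(V r) ⧸ K r) →ₗ[ℝ] ℝ :=
  (K r).liftQ ((lcoeff ℝ (Finsupp.single 0 c + Finsupp.single 1 d) +
      lcoeff ℝ (Finsupp.single 0 d + Finsupp.single 1 c)) ∘ₗ (V r).subtype) (by
    unfold K
    rw [Submodule.span_le]
    rintro g ⟨f, hf⟩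
    simp [hf, swapStar_coeff])

lemma phi_hom {r : ℕ} (f : MvPolynomial (Fin 2) ℝ) (hf : f.IsHomogeneous r) :
    (Phi f).IsHomogeneous r := by
  have h1 := hf.aeval ![X 0 + X 1, X 1] (n := 1) (S := ℝ) (σ := Fin 2) (τ := Fin 2) (by
    intro i; fin_cases i
    · exact (isHomogeneous_X _ _).add (isHomogeneous_X _ _)
    · exact isHomogeneous_X _ _)
  have h2 := hf.aeval ![X 0, X 0 + X 1] (n := 1) (S := ℝ) (σ := Fin 2) (τ := Fin 2) (by
    intro i; fin_cases i
    · exact isHomogeneous_X _ _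
    · exact (isHomogeneous_X _ _).add (isHomogeneous_X _ _))
  rw [one_mul] at h1 h2
  exact h1.add h2

lemma main_bound_s15 (r : ℕ) (hr : Even r)
    (PhiSym : (↥(V r) ⧸ K r) →ₗ[ℝ] (↥(V r) ⧸ K r))
    (hsym : ∀ f g : ↥(V r),
      Phi (f : MvPolynomial (Fin 2) ℝ) = (g : MvPolynomial (Fin 2) ℝ) →
      PhiSym (Submodule.Quotient.mk f) = Submodule.Quotient.mk g)
    (s : ℝ) (δ n : ℕ) (hs : (-1) ^ δ = s) (hn : ∀ i < n, 2 * (2 * i + δ) ≤ r) :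
    n ≤ Module.finrank ℝ ↥(LinearMap.ker (PhiSym + s • (LinearMap.id : (↥(V r) ⧸ K r) →ₗ[ℝ] (↥(V r) ⧸ K r)))) + (r / 6 + 1) := by
  have : Module.Finite ℝ ↥(V r) := Module.Finite.iff_fg.2 (homogeneousSubmodule_fg (Fin 2) ℝ r)
  obtain ⟨m, hm⟩ := hr
  -- basis vectors
  have hab : ∀ i : Fin n, (2 * (i : ℕ) + δ) + (r - (2 * i + δ)) = r := by
    intro i; have := hn i i.2; omega
  let v : Fin n → ↥(V r) := fun i =>
    ⟨X 0 ^ (2 * (i : ℕ) + δ) * X 1 ^ (r - (2 * i + δ)), by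
      have := mon_hom (2 * (i : ℕ) + δ) (r - (2 * i + δ))
      rw [hab i] at this
      exact this⟩
  let w : Fin n → (↥(V r) ⧸ K r) := fun i => Submodule.Quotient.mk (v i)
  let L : (Fin n → ℝ) →ₗ[ℝ] (↥(V r) ⧸ K r) := Fintype.linearCombination ℝ w
  have hL : Function.Injective L := by
    rw [← LinearMap.ker_eq_bot, LinearMap.ker_eq_bot']
    intro c hc
    funext j
    have h := congrArg (symCoeff r (2 * (j : ℕ) + δ) (r - (2 * j + δ))) hc
    have hw : ∀ i, symCoeff r (2 * (j : ℕ) + δ) (r - (2 * j + δ)) (w i) =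
        if i = j then (1 + if 2 * (2 * (j : ℕ) + δ) = r then 1 else 0) else 0 := by
      intro i
      have h1 : symCoeff r (2 * (j : ℕ) + δ) (r - (2 * j + δ)) (w i) =
        coeff (Finsupp.single 0 (2 * (j : ℕ) + δ) + Finsupp.single 1 (r - (2 * j + δ)))
          (v i : MvPolynomial (Fin 2) ℝ) +
        coeff (Finsupp.single 0 (r - (2 * j + δ)) + Finsupp.single 1 (2 * (j : ℕ) + δ))
          (v i : MvPolynomial (Fin 2) ℝ) := rfl
      rw [h1]
      simp only [v]
      rw [coeff_mon, coeff_mon]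
      have := hn i i.2
      have := hn j j.2
      by_cases hij : i = j
      · subst hij
        simp only [and_self, if_true]
        congr 2
        rw [eq_iff_iff]; omega
      · have hij' : (i : ℕ) ≠ j := fun h => hij (Fin.ext h)
        rw [if_neg (by omega), if_neg (by omega), if_neg hij, add_zero]
    simp only [L, Fintype.linearCombination_apply, map_sum, map_smul, hw, map_zero,
      smul_eq_mul, mul_ite, mul_zero, Finset.sum_ite_eq', Finset.mem_univ, if_true] at h
    rcases mul_eq_zero.1 h with h | h
    · exact h
    · exfalso; split_ifs at h <;> norm_num at h
  -- target space
  have hg : ∀ k : Fin (r / 6 + 1), 2 * (m - 3 * (k : ℕ)) + 3 * (2 * k) = r := by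
    intro k; have := k.2; omega
  let g : Fin (r / 6 + 1) → ↥(V r) := fun k =>
    ⟨ee2 ^ (m - 3 * (k : ℕ)) * ee3 ^ (2 * (k : ℕ)), by
      have := EE_gen_hom (m - 3 * (k : ℕ)) (2 * (k : ℕ))
      rw [hg k] at this
      exact this⟩
  let G : Submodule ℝ ↥(V r) := Submodule.span ℝ (Set.range g)
  have hGE : ∀ p : ↥(V r), (p : MvPolynomial (Fin 2) ℝ) ∈ EE r → p ∈ G := by
    have h1 : EE r ≤ G.map (V r).subtype := by
      unfold EE
      rw [Submodule.span_le]
      rintro _ ⟨i, j, hij, rfl⟩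
      refine ⟨g ⟨j / 2, by omega⟩, Submodule.subset_span ⟨_, rfl⟩, ?_⟩
      simp only [g, Submodule.subtype_apply]
      rw [show m - 3 * (j / 2) = i by omega, show 2 * (j / 2) = j by omega]
    intro p hp
    obtain ⟨p', hp', h⟩ := h1 hp
    rwa [← Subtype.ext h]
  let W : Submodule ℝ (↥(V r) ⧸ K r) := G.map (K r).mkQ
  have hW : Module.finrank ℝ W ≤ r / 6 + 1 := by
    refine (Submodule.finrank_map_le _ _).trans ?_
    refine (finrank_range_le_card g).trans ?_
    simp
  let M := (PhiSym + s • (LinearMap.id : (↥(V r) ⧸ K r) →ₗ[ℝ] (↥(V r) ⧸ K r))) ∘ₗ L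
  have hM : LinearMap.range M ≤ W := by
    have hwi : ∀ i, (PhiSym + s • (LinearMap.id : (↥(V r) ⧸ K r) →ₗ[ℝ] (↥(V r) ⧸ K r))) (w i) ∈ W := by
      intro i
      have ha : (-1 : ℝ) ^ (2 * (i : ℕ) + δ) = s := by rw [pow_add, pow_mul]; simp [hs]
      have hb : (-1 : ℝ) ^ (r - (2 * (i : ℕ) + δ)) = s := by
        rw [← ha]
        have := hab i
        rcases Nat.even_or_odd (2 * (i : ℕ) + δ) with he | he
        · rw [he.neg_one_pow, Even.neg_one_pow]
          obtain ⟨t, ht⟩ := he; exact ⟨m - t, by omega⟩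
        · rw [he.neg_one_pow, Odd.neg_one_pow]
          obtain ⟨t, ht⟩ := he; exact ⟨m - t - 1, by omega⟩
      have hk := key _ _ s ha hb
      simp only at hk
      let pf : ↥(V r) := ⟨Phi (v i), phi_hom _ (v i).2⟩
      let q : ↥(V r) := pf + s • v i
      let q' : ↥(V r) := ⟨swapStar q, swap_hom _ q.2⟩
      have h1 : (PhiSym + s • (LinearMap.id : (↥(V r) ⧸ K r) →ₗ[ℝ] (↥(V r) ⧸ K r))) (w i) = Submodule.Quotient.mk q := by
        simp only [LinearMap.add_apply, LinearMap.smul_apply, LinearMap.id_apply, w, q,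
          Submodule.Quotient.mk_add, Submodule.Quotient.mk_smul]
        rw [hsym (v i) pf rfl]
      have h2 : (Submodule.Quotient.mk q' : ↥(V r) ⧸ K r) = Submodule.Quotient.mk q :=
        swap_sub_mem q q' rfl
      have h3 : q + q' ∈ G := by
        apply hGE
        have h4 : ((q + q' : ↥(V r)) : MvPolynomial (Fin 2) ℝ) =
          s • (pps (2 * (i : ℕ) + δ) * pps (r - (2 * i + δ)) -
            pps ((2 * (i : ℕ) + δ) + (r - (2 * i + δ)))) := hk
        rw [h4]
        refine Submodule.smul_mem _ _ (Submodule.sub_mem _ ?_ ?_)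
        · have := EE_mul (pps_mem (2 * (i : ℕ) + δ)) (pps_mem (r - (2 * i + δ)))
          rwa [hab i] at this
        · rw [hab i]; exact pps_mem r
      have h5 : (PhiSym + s • (LinearMap.id : (↥(V r) ⧸ K r) →ₗ[ℝ] (↥(V r) ⧸ K r))) (w i) = (2⁻¹ : ℝ) • (K r).mkQ (q + q') := by
        rw [h1, map_add, Submodule.mkQ_apply, Submodule.mkQ_apply, h2, ← two_smul ℝ, smul_smul]
        norm_num
      rw [h5]
      exact Submodule.smul_mem _ _ (Submodule.mem_map_of_mem h3)
    rintro _ ⟨c, rfl⟩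
    simp only [M, L, LinearMap.comp_apply, Fintype.linearCombination_apply, map_sum, map_smul]
    exact Submodule.sum_mem _ fun i _ => Submodule.smul_mem _ _ (hwi i)
  have h1 := LinearMap.finrank_range_add_finrank_ker M
  have h2 := (Submodule.finrank_mono hM).trans hW
  have h3 : Module.finrank ℝ (LinearMap.ker M) ≤
      Module.finrank ℝ ↥(LinearMap.ker (PhiSym + s • (LinearMap.id : (↥(V r) ⧸ K r) →ₗ[ℝ] (↥(V r) ⧸ K r)))) := by
    rw [(Submodule.equivMapOfInjective L hL (LinearMap.ker M)).finrank_eq]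
    apply Submodule.finrank_mono
    rintro _ ⟨c, hc, rfl⟩
    exact hc
  rw [Module.finrank_fin_fun] at h1
  omega

/-- For even `r`, lower bounds on the multiplicities of the eigenvalues `1` and `-1`
of `Φ_sym` on `V_sym = V / K`, according to `r mod 12`.  Here `Φ_sym` is the operator
induced by `Φ` on the quotient, characterized by the compatibility hypothesis `hsym`. -/
theorem dim_eig_PhiSym (r : ℕ) (hr : Even r)
    (PhiSym : (↥(V r) ⧸ K r) →ₗ[ℝ] (↥(V r) ⧸ K r))
    (hsym : ∀ f g : ↥(V r),
      Phi (f : MvPolynomial (Fin 2) ℝ) = (g : MvPolynomial (Fin 2) ℝ) →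
      PhiSym (Submodule.Quotient.mk f) = Submodule.Quotient.mk g) :
    (r % 12 = 0 → ((r : ℤ) - 12) / 12 ≤
      (Module.finrank ℝ ↥(LinearMap.ker (PhiSym - LinearMap.id)) : ℤ)) ∧
    (r % 12 = 2 → ((r : ℤ) - 2) / 12 ≤
      (Module.finrank ℝ ↥(LinearMap.ker (PhiSym - LinearMap.id)) : ℤ)) ∧
    (r % 12 = 4 → ((r : ℤ) - 4) / 12 ≤
      (Module.finrank ℝ ↥(LinearMap.ker (PhiSym - LinearMap.id)) : ℤ)) ∧
    (r % 12 = 6 → ((r : ℤ) - 6) / 12 ≤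
      (Module.finrank ℝ ↥(LinearMap.ker (PhiSym - LinearMap.id)) : ℤ)) ∧
    (r % 12 = 8 → ((r : ℤ) - 8) / 12 ≤
      (Module.finrank ℝ ↥(LinearMap.ker (PhiSym - LinearMap.id)) : ℤ)) ∧
    (r % 12 = 10 → ((r : ℤ) + 2) / 12 ≤
      (Module.finrank ℝ ↥(LinearMap.ker (PhiSym - LinearMap.id)) : ℤ)) ∧
    (r % 12 = 0 → (r : ℤ) / 12 ≤
      (Module.finrank ℝ ↥(LinearMap.ker (PhiSym + LinearMap.id)) : ℤ)) ∧
    (r % 12 = 2 → ((r : ℤ) - 2) / 12 ≤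
      (Module.finrank ℝ ↥(LinearMap.ker (PhiSym + LinearMap.id)) : ℤ)) ∧
    (r % 12 = 4 → ((r : ℤ) + 8) / 12 ≤
      (Module.finrank ℝ ↥(LinearMap.ker (PhiSym + LinearMap.id)) : ℤ)) ∧
    (r % 12 = 6 → ((r : ℤ) - 6) / 12 ≤
      (Module.finrank ℝ ↥(LinearMap.ker (PhiSym + LinearMap.id)) : ℤ)) ∧
    (r % 12 = 8 → ((r : ℤ) + 4) / 12 ≤
      (Module.finrank ℝ ↥(LinearMap.ker (PhiSym + LinearMap.id)) : ℤ)) ∧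
    (r % 12 = 10 → ((r : ℤ) + 2) / 12 ≤
      (Module.finrank ℝ ↥(LinearMap.ker (PhiSym + LinearMap.id)) : ℤ)) := by
  have hp := main_bound_s15 r hr PhiSym hsym (-1) 1 ((r + 2) / 4) (by norm_num) (by intro i hi; omega)
  have hm := main_bound_s15 r hr PhiSym hsym 1 0 (r / 4 + 1) (by norm_num) (by intro i hi; omega)
  have e1 : PhiSym + (-1 : ℝ) • (LinearMap.id : (↥(V r) ⧸ K r) →ₗ[ℝ] (↥(V r) ⧸ K r))
      = PhiSym - LinearMap.id := by
    apply LinearMap.ext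
    intro x
    rw [LinearMap.add_apply, LinearMap.sub_apply, LinearMap.smul_apply, neg_one_smul,
      sub_eq_add_neg]
  have e2 : PhiSym + (1 : ℝ) • (LinearMap.id : (↥(V r) ⧸ K r) →ₗ[ℝ] (↥(V r) ⧸ K r))
      = PhiSym + LinearMap.id := by
    apply LinearMap.ext
    intro x
    rw [LinearMap.add_apply, LinearMap.add_apply, LinearMap.smul_apply, one_smul]
  rw [e1] at hp
  rw [e2] at hm
  refine ⟨?_, ?_, ?_, ?_, ?_, ?_, ?_, ?_, ?_, ?_, ?_, ?_⟩ <;> intro h <;> omega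
end

section
/- Let r be an odd natural number and set ℓ = (r+2)/3 if r ≡ 1 (mod 6), ℓ = r/3 if r ≡ 3 (mod 6), and ℓ = (r+1)/3 if r ≡ 5 (mod 6). Then there exist real numbers a_1, …, a_ℓ and a natural number N such that, for every homogeneous polynomial f of degree r in two real variables and every n ≥ N, S_n(f) = Σ_{j=1}^{ℓ} a_j S_{n−j}(f). The coefficients a_j depend only on r, not on f. -/
/-- The Stern array: `stern n k` is the entry `s(n,k)` of the Stern array,
with `s(1,1) = 1`, `s(1,k) = 0` for `k ≠ 1`, and
`s(n,2k) = s(n-1,k)`, `s(n,2k+1) = s(n-1,k) + s(n-1,k+1)`. -/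
def stern : ℕ → ℤ → ℕ
  | 0, _ => 0
  | 1, k => if k = 1 then 1 else 0
  | n + 2, k =>
    if k % 2 = 0 then stern (n + 1) (k / 2)
    else stern (n + 1) ((k - 1) / 2) + stern (n + 1) ((k + 1) / 2)

/-- For a polynomial `f` in two variables,
`S n f = ∑_{k=0}^{2^n - 1} f(s(n,k), s(n,k+1))`. -/
noncomputable def S (n : ℕ) (f : MvPolynomial (Fin 2) ℝ) : ℝ :=
  ∑ k ∈ Finset.range (2 ^ n),
    MvPolynomial.eval ![(stern n (k : ℤ) : ℝ), (stern n ((k : ℤ) + 1) : ℝ)] f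

namespace SternAux
open MvPolynomial

noncomputable def A : MvPolynomial (Fin 2) ℝ →ₐ[ℝ] MvPolynomial (Fin 2) ℝ :=
  aeval ![X 0, X 0 + X 1]
noncomputable def B : MvPolynomial (Fin 2) ℝ →ₐ[ℝ] MvPolynomial (Fin 2) ℝ :=
  aeval ![X 0 + X 1, X 1]
noncomputable def σ : MvPolynomial (Fin 2) ℝ →ₐ[ℝ] MvPolynomial (Fin 2) ℝ :=
  aeval ![X 1, X 0]
noncomputable def T : MvPolynomial (Fin 2) ℝ →ₗ[ℝ] MvPolynomial (Fin 2) ℝ :=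
  A.toLinearMap + B.toLinearMap

lemma T_apply (f) : T f = A f + B f := rfl

lemma σσ (f) : σ (σ f) = f := by
  have : σ.comp σ = AlgHom.id ℝ _ := by
    ext i; fin_cases i <;> simp [σ]
  exact DFunLike.congr_fun this f

lemma σA (f) : σ (A f) = B (σ f) := by
  have : σ.comp A = B.comp σ := by
    apply MvPolynomial.algHom_ext; intro i; fin_cases i <;> simp [σ, A, B, add_comm]
  exact DFunLike.congr_fun this f

lemma σB (f) : σ (B f) = A (σ f) := by
  have : σ.comp B = A.comp σ := by
    apply MvPolynomial.algHom_ext; intro i; fin_cases i <;> simp [σ, A, B, add_comm]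
  exact DFunLike.congr_fun this f

lemma σT (f) : σ (T f) = T (σ f) := by
  rw [T_apply, T_apply, map_add, σA, σB, add_comm]

lemma eval_A (x y : ℝ) (f) : eval ![x, y] (A f) = eval ![x, x + y] f := by
  have : (aeval (R := ℝ) ![x, y]).comp A = aeval (R := ℝ) ![x, x + y] := by
    apply MvPolynomial.algHom_ext; intro i; fin_cases i <;> simp [A]
  simpa [aeval_eq_eval] using DFunLike.congr_fun this f

lemma eval_B (x y : ℝ) (f) : eval ![x, y] (B f) = eval ![x + y, y] f := by
  have : (aeval (R := ℝ) ![x, y]).comp B = aeval (R := ℝ) ![x + y, y] := by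
    apply MvPolynomial.algHom_ext; intro i; fin_cases i <;> simp [B]
  simpa [aeval_eq_eval] using DFunLike.congr_fun this f

lemma eval_σ (x y : ℝ) (f) : eval ![x, y] (σ f) = eval ![y, x] f := by
  have : (aeval (R := ℝ) ![x, y]).comp σ = aeval (R := ℝ) ![y, x] := by
    apply MvPolynomial.algHom_ext; intro i; fin_cases i <;> simp [σ]
  simpa [aeval_eq_eval] using DFunLike.congr_fun this f

lemma sum_two_mul (g : ℕ → ℝ) (m : ℕ) :
    ∑ k ∈ Finset.range (2 * m), g k = ∑ k ∈ Finset.range m, (g (2 * k) + g (2 * k + 1)) := by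
  induction m with
  | zero => simp
  | succ m ih =>
    rw [show 2 * (m + 1) = 2 * m + 1 + 1 by ring, Finset.sum_range_succ, Finset.sum_range_succ, ih,
      Finset.sum_range_succ]
    ring

lemma stern_even (n : ℕ) (k : ℤ) : stern (n + 2) (2 * k) = stern (n + 1) k := by
  rw [stern, if_pos (by omega)]; congr 1; omega

lemma stern_odd (n : ℕ) (k : ℤ) :
    stern (n + 2) (2 * k + 1) = stern (n + 1) k + stern (n + 1) (k + 1) := by
  rw [stern, if_neg (by omega)]; congr 2 <;> omega

lemma S_succ (n : ℕ) (f) : S (n + 2) f = S (n + 1) (T f) := by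
  unfold S
  rw [show 2 ^ (n + 2) = 2 * 2 ^ (n + 1) by ring, sum_two_mul]
  refine Finset.sum_congr rfl fun k _ => ?_
  rw [T_apply, map_add, eval_A, eval_B]
  push_cast
  rw [show (2 * (k : ℤ) + 1 + 1) = 2 * (k + 1) by ring, stern_even, stern_even, stern_odd]
  push_cast
  rfl

lemma S_σ (n : ℕ) (f) : S (n + 1) (σ f) = S (n + 1) f := by
  induction n generalizing f with
  | zero =>
    simp [S, Finset.sum_range_succ, eval_σ, stern, add_comm]
  | succ n ih => rw [S_succ, S_succ, ← σT, ih]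

lemma S_add_apply (n : ℕ) (f g) : S n (f + g) = S n f + S n g := by
  simp [S, Finset.sum_add_distrib]

lemma S_smul (n : ℕ) (c : ℝ) (g) : S n (c • g) = c * S n g := by
  simp [S, Finset.mul_sum, smul_eval]

lemma S_pow (n k : ℕ) (f) : S (n + 1 + k) f = S (n + 1) ((T ^ k) f) := by
  induction k generalizing f with
  | zero => simp
  | succ k ih =>
    rw [show n + 1 + (k + 1) = (n + k) + 2 by ring, S_succ, show n + k + 1 = n + 1 + k by ring, ih,
      pow_succ]
    rfl

/-- symmetric forms -/
noncomputable def W (r : ℕ) : Submodule ℝ (MvPolynomial (Fin 2) ℝ) :=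
  homogeneousSubmodule (Fin 2) ℝ r ⊓ LinearMap.eqLocus σ.toLinearMap LinearMap.id

lemma mem_W {r : ℕ} {f} : f ∈ W r ↔ f.IsHomogeneous r ∧ σ f = f := Iff.rfl

lemma hom_A {r : ℕ} {f : MvPolynomial (Fin 2) ℝ} (h : f.IsHomogeneous r) :
    (A f).IsHomogeneous r := by
  have := h.aeval (φ := f) (![X 0, X 0 + X 1] : Fin 2 → MvPolynomial (Fin 2) ℝ) (n := 1) (by
    intro i; fin_cases i
    · exact isHomogeneous_X _ _
    · exact (isHomogeneous_X _ _).add (isHomogeneous_X _ _))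
  simpa [A] using this

lemma hom_σ {r : ℕ} {f : MvPolynomial (Fin 2) ℝ} (h : f.IsHomogeneous r) :
    (σ f).IsHomogeneous r := by
  have := h.aeval (φ := f) (![X 1, X 0] : Fin 2 → MvPolynomial (Fin 2) ℝ) (n := 1) (by
    intro i; fin_cases i
    · exact isHomogeneous_X _ _
    · exact isHomogeneous_X _ _)
  simpa [σ] using this

lemma hom_B {r : ℕ} {f : MvPolynomial (Fin 2) ℝ} (h : f.IsHomogeneous r) :
    (B f).IsHomogeneous r := by
  rw [← σσ f, ← σA]; exact hom_σ (hom_A (hom_σ h))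

lemma T_W (r : ℕ) : ∀ f ∈ W r, T f ∈ W r := by
  intro f hf
  rw [mem_W] at *
  exact ⟨(hom_A hf.1).add (hom_B hf.1), by rw [σT, hf.2]⟩

noncomputable def TW (r : ℕ) : W r →ₗ[ℝ] W r := T.restrict (T_W r)

noncomputable def coefs (r M : ℕ) : W r →ₗ[ℝ] (Fin (M + 1) → ℝ) :=
  LinearMap.pi fun i => (lcoeff ℝ (Finsupp.single 0 (i : ℕ) + Finsupp.single 1 (r - i))) ∘ₗ
    (W r).subtype

lemma coeff_σ (f) (m : Fin 2 →₀ ℕ) :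
    coeff m (σ f) = coeff (Finsupp.single 0 (m 1) + Finsupp.single 1 (m 0)) f := by
  have h : σ = rename (Equiv.swap (0 : Fin 2) 1) := by
    apply MvPolynomial.algHom_ext; intro i; fin_cases i <;> simp [σ]
  have hm : m = (Finsupp.single (0 : Fin 2) (m 1) + Finsupp.single 1 (m 0)).mapDomain
      (Equiv.swap (0 : Fin 2) 1) := by
    rw [Finsupp.mapDomain_add, Finsupp.mapDomain_single, Finsupp.mapDomain_single]
    ext i; fin_cases i <;> simp
  conv_lhs => rw [hm, h, coeff_rename_mapDomain _ (Equiv.injective _)]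

lemma coefs_inj (r M : ℕ) (h : r = 2 * M + 1) : Function.Injective (coefs r M) := by
  rw [injective_iff_map_eq_zero]
  rintro ⟨f, hf⟩ h0
  rw [mem_W] at hf
  have key : ∀ m : Fin 2 →₀ ℕ, m 0 + m 1 = r → m 0 ≤ M → coeff m f = 0 := by
    intro m hm hM
    have := congrFun h0 ⟨m 0, by omega⟩
    simp only [coefs, LinearMap.pi_apply, LinearMap.comp_apply, lcoeff_apply,
      Submodule.subtype_apply, Pi.zero_apply] at this
    rw [← this]
    congr 1
    ext i; fin_cases i <;> simp; omega
  ext m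
  simp only [ZeroMemClass.coe_zero, coeff_zero]
  by_cases hm : m 0 + m 1 = r
  · by_cases hM : m 0 ≤ M
    · exact key m hm hM
    · rw [← hf.2, coeff_σ]
      apply key <;> simp <;> omega
  · apply hf.1.coeff_eq_zero
    rw [Finsupp.degree_eq_sum]; simpa using hm

noncomputable def F (a c : ℕ) : MvPolynomial (Fin 2) ℝ :=
  (X 0 + X 1) * (X 0 - 2 * X 1) * (2 * X 0 - X 1) * (X 0 ^ 2 - X 0 * X 1 + X 1 ^ 2) ^ a *
    ((X 0 * X 1 * (X 0 - X 1)) ^ 2) ^ c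

lemma F_hom (a c : ℕ) : (F a c).IsHomogeneous (3 + 2 * a + 6 * c) := by
  have h0 : (X 0 : MvPolynomial (Fin 2) ℝ).IsHomogeneous 1 := isHomogeneous_X _ _
  have h1 : (X 1 : MvPolynomial (Fin 2) ℝ).IsHomogeneous 1 := isHomogeneous_X _ _
  have h2 : (2 : MvPolynomial (Fin 2) ℝ).IsHomogeneous 0 := isHomogeneous_C _ (2 : ℝ)
  have e1 := h0.add h1
  have e2 := h0.sub (by simpa using h2.mul h1 : (2 * X 1 : MvPolynomial (Fin 2) ℝ).IsHomogeneous 1)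
  have e3 := (by simpa using h2.mul h0 : (2 * X 0 : MvPolynomial (Fin 2) ℝ).IsHomogeneous 1).sub h1
  have e4 := (((h0.pow 2).sub (h0.mul h1)).add (h1.pow 2)).pow a
  have e5 := (((h0.mul h1).mul (h0.sub h1)).pow 2).pow c
  have := (((e1.mul e2).mul e3).mul e4).mul e5
  rw [F]; convert this using 1

lemma F_σ (a c : ℕ) : σ (F a c) = F a c := by
  simp only [F, σ, map_mul, map_pow, map_sub, map_add, map_ofNat, aeval_X, Matrix.cons_val_zero,
    Matrix.cons_val_one]
  rw [show (X 1 * X 0 * (X 1 - X 0) : MvPolynomial (Fin 2) ℝ) ^ 2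
    = (X 0 * X 1 * (X 0 - X 1)) ^ 2 by ring,
    show (X 1 ^ 2 - X 1 * X 0 + X 0 ^ 2 : MvPolynomial (Fin 2) ℝ)
      = X 0 ^ 2 - X 0 * X 1 + X 1 ^ 2 by ring]
  ring

lemma F_T (a c : ℕ) : T (F a c) = 0 := by
  simp only [T_apply, F, A, B, map_mul, map_pow, map_sub, map_add, map_ofNat, aeval_X,
    Matrix.cons_val_zero, Matrix.cons_val_one]
  generalize (X 0 : MvPolynomial (Fin 2) ℝ) = x
  generalize (X 1 : MvPolynomial (Fin 2) ℝ) = y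
  rw [show (x ^ 2 - x * (x + y) + (x + y) ^ 2) = x ^ 2 + x * y + y ^ 2 by ring,
    show ((x + y) ^ 2 - (x + y) * y + y ^ 2) = x ^ 2 + x * y + y ^ 2 by ring,
    show (x * (x + y) * (x - (x + y))) ^ 2 = (x * y * (x + y)) ^ 2 by ring,
    show ((x + y) * y * (x + y - y)) ^ 2 = (x * y * (x + y)) ^ 2 by ring]
  ring

noncomputable def deh : MvPolynomial (Fin 2) ℝ →ₐ[ℝ] Polynomial ℝ := aeval ![Polynomial.X, 1]

lemma F_deg (a c : ℕ) : (deh (F a c)).natDegree = 3 + 2 * a + 4 * c := by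
  simp only [deh, F, map_mul, map_pow, map_sub, map_add, map_ofNat, aeval_X,
    Matrix.cons_val_zero, Matrix.cons_val_one, mul_one, one_pow]
  have d1 : (Polynomial.X + 1 : Polynomial ℝ).natDegree = 1 := by compute_degree!
  have d2 : (Polynomial.X - 2 : Polynomial ℝ).natDegree = 1 := by compute_degree!
  have d3 : (2 * Polynomial.X - 1 : Polynomial ℝ).natDegree = 1 := by compute_degree!
  have d4 : (Polynomial.X ^ 2 - Polynomial.X + 1 : Polynomial ℝ).natDegree = 2 := by
    compute_degree!
  have d5 : (Polynomial.X * (Polynomial.X - 1) : Polynomial ℝ).natDegree = 2 := by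
    rw [mul_sub]; compute_degree!
  have n (p : Polynomial ℝ) (k : ℕ) (h : p.natDegree = k) (hk : k ≠ 0) : p ≠ 0 := by
    rintro rfl; simp at h; omega
  have n1 := n _ _ d1 (by norm_num)
  have n2 := n _ _ d2 (by norm_num)
  have n3 := n _ _ d3 (by norm_num)
  have n4 := n _ _ d4 (by norm_num)
  have n5 := n _ _ d5 (by norm_num)
  rw [Polynomial.natDegree_mul, Polynomial.natDegree_mul, Polynomial.natDegree_mul,
    Polynomial.natDegree_mul, Polynomial.natDegree_pow, Polynomial.natDegree_pow,
    Polynomial.natDegree_pow, d1, d2, d3, d4, d5]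
  · ring
  all_goals repeat' first | assumption | with_reducible apply pow_ne_zero | with_reducible apply mul_ne_zero


lemma deh_ne (a c : ℕ) : deh (F a c) ≠ 0 := by
  intro h; have := F_deg a c; rw [h] at this; simp at this; omega

lemma li_aux {ι : Type*} [Fintype ι] (p : ι → Polynomial ℝ) (h0 : ∀ i, p i ≠ 0)
    (h : Function.Injective fun i => (p i).natDegree) : LinearIndependent ℝ p := by
  rw [Fintype.linearIndependent_iff]
  intro g hg i
  by_contra hi
  have := Polynomial.degree_sum_eq_of_disjoint (fun i => g i • p i) Finset.univ (by
    rintro a ⟨_, ha⟩ b ⟨_, hb⟩ hab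
    have ga : g a ≠ 0 := by rintro h; simp [h] at ha
    have gb : g b ≠ 0 := by rintro h; simp [h] at hb
    simp only [Function.onFun, Function.comp]
    rw [Polynomial.degree_smul_of_smul_regular _ (IsSMulRegular.of_ne_zero ga),
      Polynomial.degree_smul_of_smul_regular _ (IsSMulRegular.of_ne_zero gb)]
    intro e
    exact hab (h (Polynomial.natDegree_eq_natDegree e)))
  rw [hg, Polynomial.degree_zero] at this
  have h2 := Finset.le_sup (f := fun i => (g i • p i).degree) (Finset.mem_univ i)
  rw [← this, le_bot_iff, Polynomial.degree_eq_bot] at h2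
  exact smul_ne_zero hi (h0 i) h2

/-- elements of the kernel -/
noncomputable def K (M : ℕ) (c : Fin ((M + 2) / 3)) : LinearMap.ker (TW (2 * M + 1)) :=
  ⟨⟨F (M - 1 - 3 * c) c, by
    rw [mem_W]; refine ⟨?_, F_σ _ _⟩
    convert F_hom _ _ using 1
    have := c.2; omega⟩, by
    rw [LinearMap.mem_ker]; apply Subtype.ext; exact F_T _ _⟩

lemma K_li (M : ℕ) : LinearIndependent ℝ (K M) := by
  apply LinearIndependent.of_comp
    (deh.toLinearMap ∘ₗ (W (2 * M + 1)).subtype ∘ₗ (LinearMap.ker (TW (2 * M + 1))).subtype)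
  apply li_aux
  · intro c; exact deh_ne _ _
  · intro c d h
    change (deh (F _ _)).natDegree = (deh (F _ _)).natDegree at h
    rw [F_deg, F_deg] at h
    have := c.2; have := d.2
    ext; omega

instance (M : ℕ) : FiniteDimensional ℝ (W (2 * M + 1)) :=
  FiniteDimensional.of_injective _ (coefs_inj _ M rfl)

lemma rank_le (M : ℕ) :
    Module.finrank ℝ (LinearMap.range (TW (2 * M + 1))) + (M + 2) / 3 ≤ M + 1 := by
  have h1 := LinearMap.finrank_range_add_finrank_ker (TW (2 * M + 1))
  have h2 := LinearMap.finrank_le_finrank_of_injective (coefs_inj _ M rfl)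
  have h3 := (K_li M).fintype_card_le_finrank
  simp at h2 h3
  omega

lemma exists_poly {V : Type*} [AddCommGroup V] [Module ℝ V] [FiniteDimensional ℝ V]
    (t : V →ₗ[ℝ] V) (l : ℕ) (h : Module.finrank ℝ (LinearMap.range t) ≤ l) :
    ∃ p : Polynomial ℝ, p.Monic ∧ p.natDegree = l ∧ ∀ v, Polynomial.aeval t p (t v) = 0 := by
  let tres : LinearMap.range t →ₗ[ℝ] LinearMap.range t :=
    t.restrict (fun x _ => LinearMap.mem_range_self t x)
  have hp : ∀ (q : Polynomial ℝ) (x : LinearMap.range t),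
      ((Polynomial.aeval tres q x : LinearMap.range t) : V) = Polynomial.aeval t q (x : V) := by
    intro q
    induction q using Polynomial.induction_on' with
    | add p q hp hq => intro x; simp [hp, hq]
    | monomial n a =>
      intro x
      have : ∀ n : ℕ, (((tres ^ n) x : LinearMap.range t) : V) = (t ^ n) (x : V) := by
        intro n
        induction n with
        | zero => simp
        | succ n ih =>
          rw [pow_succ', pow_succ', Module.End.mul_apply, Module.End.mul_apply, ← ih]; rfl
      simp [Polynomial.aeval_monomial, this]
  refine ⟨tres.charpoly * Polynomial.X ^ (l - Module.finrank ℝ (LinearMap.range t)),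
    tres.charpoly_monic.mul (Polynomial.monic_X_pow _), ?_, ?_⟩
  · rw [tres.charpoly_monic.natDegree_mul (Polynomial.monic_X_pow _), Polynomial.natDegree_X_pow,
      tres.charpoly_natDegree]
    omega
  · intro v
    have := hp (tres.charpoly * Polynomial.X ^ (l - Module.finrank ℝ (LinearMap.range t)))
      ⟨t v, LinearMap.mem_range_self t v⟩
    rw [map_mul, tres.aeval_self_charpoly] at this
    simpa using this.symm

lemma TW_pow (r k : ℕ) (w : W r) : (((TW r ^ k) w : W r) : MvPolynomial (Fin 2) ℝ) =
    (T ^ k) (w : MvPolynomial (Fin 2) ℝ) := by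
  induction k with
  | zero => simp
  | succ n ih => rw [pow_succ', pow_succ', Module.End.mul_apply, Module.End.mul_apply, ← ih]; rfl

lemma S_sum (n : ℕ) {ι : Type*} (s : Finset ι) (c : ι → ℝ) (g : ι → MvPolynomial (Fin 2) ℝ) :
    S n (∑ i ∈ s, c i • g i) = ∑ i ∈ s, c i * S n (g i) := by
  simp only [S, map_sum, smul_eval, Finset.mul_sum]
  rw [Finset.sum_comm]

lemma main_W (M l : ℕ) (hl : l + (M + 2) / 3 = M + 1) : ∃ a : ℕ → ℝ, ∀ w ∈ W (2 * M + 1), ∀ n,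
    l + 2 ≤ n → S n w = ∑ j ∈ Finset.Icc 1 l, a j * S (n - j) w := by
  obtain ⟨p, pm, pd, hp⟩ := exists_poly (TW (2 * M + 1)) l (by have := rank_le M; omega)
  refine ⟨fun j => - p.coeff (l - j), fun w hw n hn => ?_⟩
  obtain ⟨m, rfl⟩ : ∃ m, n = m + 1 + (l + 1) := ⟨n - l - 2, by omega⟩
  have h := congrArg (fun x : W (2 * M + 1) => S (m + 1) (x : MvPolynomial (Fin 2) ℝ)) (hp ⟨w, hw⟩)
  simp only [Polynomial.aeval_eq_sum_range, LinearMap.sum_apply, LinearMap.smul_apply,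
    Submodule.coe_sum, Submodule.coe_smul, ← Module.End.mul_apply, ← pow_succ, TW_pow, S_sum,
    ← S_pow] at h
  rw [pd, Finset.sum_range_succ, show p.coeff l = 1 by rw [← pd]; exact pm] at h
  have h0 : S (m + 1) ((0 : W (2 * M + 1)) : MvPolynomial (Fin 2) ℝ) = 0 := by simp [S]
  rw [h0] at h
  have e : ∑ j ∈ Finset.Icc 1 l, - p.coeff (l - j) * S (m + 1 + (l + 1) - j) w =
      - ∑ i ∈ Finset.range l, p.coeff i * S (m + 1 + (i + 1)) w := by
    rw [← Finset.sum_neg_distrib]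
    refine Finset.sum_nbij' (fun j => l - j) (fun i => l - i) ?_ ?_ ?_ ?_ ?_
    · intro j; simp; omega
    · intro j; simp; omega
    · intro j; simp; omega
    · intro j; simp; omega
    · intro j hj
      simp at hj
      rw [show m + 1 + (l + 1) - j = m + 1 + (l - j + 1) by omega]; ring
  rw [e]; linarith

end SternAux

/-- For odd `r`, with `ℓ = (r+2)/3` if `r ≡ 1 (mod 6)`, `ℓ = r/3` if `r ≡ 3 (mod 6)`,
`ℓ = (r+1)/3` if `r ≡ 5 (mod 6)`, there exist reals `a_1, …, a_ℓ` (depending only on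
`r`) and `N` such that for every homogeneous polynomial `f` of degree `r` and every
`n ≥ N`, `S n f = ∑_{j=1}^{ℓ} a_j S (n-j) f`. -/
theorem S_short_recurrence_odd (r : ℕ) (hr : Odd r) (ℓ : ℕ)
    (hℓ : (r % 6 = 1 ∧ ℓ = (r + 2) / 3) ∨ (r % 6 = 3 ∧ ℓ = r / 3) ∨
      (r % 6 = 5 ∧ ℓ = (r + 1) / 3)) :
    ∃ (a : ℕ → ℝ) (N : ℕ), ∀ f : MvPolynomial (Fin 2) ℝ, f.IsHomogeneous r →
      ∀ n : ℕ, N ≤ n → S n f = ∑ j ∈ Finset.Icc 1 ℓ, a j * S (n - j) f := by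
  obtain ⟨M, rfl⟩ := hr
  obtain ⟨a, ha⟩ := SternAux.main_W M ℓ (by omega)
  refine ⟨a, ℓ + 2, fun f hf n hn => ?_⟩
  have h := ha (f + SternAux.σ f) (SternAux.mem_W.2
    ⟨hf.add (SternAux.hom_σ hf), by rw [map_add, SternAux.σσ, add_comm]⟩) n hn
  have h2 : ∀ k, 1 ≤ k → S k (f + SternAux.σ f) = 2 * S k f := by
    intro k hk
    obtain ⟨k, rfl⟩ : ∃ j, k = j + 1 := ⟨k - 1, by omega⟩
    rw [SternAux.S_add_apply, SternAux.S_σ]; ring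
  rw [h2 n (by omega)] at h
  have h3 : ∑ j ∈ Finset.Icc 1 ℓ, a j * S (n - j) (f + SternAux.σ f) =
      2 * ∑ j ∈ Finset.Icc 1 ℓ, a j * S (n - j) f := by
    rw [Finset.mul_sum]
    refine Finset.sum_congr rfl fun j hj => ?_
    rw [Finset.mem_Icc] at hj
    rw [h2 _ (by omega)]; ring
  linarith
end

section
/- Let r be an even natural number and set ℓ = (r+6)/3 if r ≡ 0 (mod 6), ℓ = (r+4)/3 if r ≡ 2 (mod 6), and ℓ = (r+2)/3 if r ≡ 4 (mod 6). Then there exist real numbers a_1, …, a_ℓ (depending only on r) and a natural number N such that, for every homogeneous polynomial f of degree r in two real variables, there exist real constants b and c (depending on f) with S_n(f) = Σ_{j=1}^{ℓ} a_j S_{n−j}(f) + b + c·(−1)^n for all n ≥ N. -/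
namespace SternProof

open MvPolynomial

/-- Bivariate real polynomials. -/
abbrev Pol := MvPolynomial (Fin 2) ℝ

/-- Evaluation at a point. -/
noncomputable def ev (f : Pol) (x y : ℝ) : ℝ := MvPolynomial.eval ![x, y] f

/-- Linear substitution. -/
noncomputable def sb (a b c d : ℝ) : Pol →ₗ[ℝ] Pol :=
  (MvPolynomial.aeval (R := ℝ)
    ![C a * X 0 + C b * X 1, (C c * X 0 + C d * X 1 : Pol)]).toLinearMap

@[simp] lemma ev_sb (a b c d : ℝ) (f : Pol) (x y : ℝ) :
    ev (sb a b c d f) x y = ev f (a * x + b * y) (c * x + d * y) := by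
  unfold ev sb
  rw [AlgHom.toLinearMap_apply, ← MvPolynomial.coe_aeval_eq_eval, ← MvPolynomial.coe_aeval_eq_eval]
  simp only [RingHom.coe_coe]
  rw [← AlgHom.comp_apply]
  congr 1
  apply MvPolynomial.algHom_ext
  intro i
  fin_cases i <;> simp

@[simp] lemma ev_add (f g : Pol) (x y : ℝ) : ev (f + g) x y = ev f x y + ev g x y := by
  simp [ev]
@[simp] lemma ev_sub (f g : Pol) (x y : ℝ) : ev (f - g) x y = ev f x y - ev g x y := by
  simp [ev]
@[simp] lemma ev_smul (c : ℝ) (g : Pol) (x y : ℝ) : ev (c • g) x y = c * ev g x y := by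
  simp [ev]

lemma ev_ext {f g : Pol} (h : ∀ x y, ev f x y = ev g x y) : f = g := by
  apply MvPolynomial.funext
  intro v
  have : v = ![v 0, v 1] := by ext i; fin_cases i <;> rfl
  rw [this]
  exact h _ _

lemma sb_hom {r : ℕ} {f : Pol} (hf : f.IsHomogeneous r) (a b c d : ℝ) :
    (sb a b c d f).IsHomogeneous r := by
  have := hf.aeval (S := ℝ) (n := 1)
    ![C a * X 0 + C b * X 1, (C c * X 0 + C d * X 1 : Pol)] (by
      intro i
      fin_cases i
      · exact (isHomogeneous_C_mul_X _ _).add (isHomogeneous_C_mul_X _ _)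
      · exact (isHomogeneous_C_mul_X _ _).add (isHomogeneous_C_mul_X _ _))
  rw [one_mul] at this
  exact this

lemma ev_hom {r : ℕ} {f : Pol} (hf : f.IsHomogeneous r) (c x y : ℝ) :
    ev f (c * x) (c * y) = c ^ r * ev f x y := by
  unfold ev
  rw [MvPolynomial.eval_eq', MvPolynomial.eval_eq', Finset.mul_sum]
  refine Finset.sum_congr rfl fun d hd => ?_
  have h := hf (MvPolynomial.mem_support_iff.1 hd)
  have h2 : d 0 + d 1 = r := by
    rw [← h]; simp [Finsupp.weight_apply, Finsupp.sum_fintype]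
  simp only [Fin.prod_univ_two, Matrix.cons_val_zero, Matrix.cons_val_one]
  rw [← h2]
  simp
  ring

lemma ev_neg {r : ℕ} (hr : Even r) {f : Pol} (hf : f.IsHomogeneous r) (x y : ℝ) :
    ev f (-x) (-y) = ev f x y := by
  have := ev_hom hf (-1) x y
  simpa [hr.neg_one_pow] using this

/-- Dehomogenization. -/
noncomputable def dh : Pol →ₗ[ℝ] Polynomial ℝ :=
  (MvPolynomial.aeval (R := ℝ) ![Polynomial.X, (1 : Polynomial ℝ)]).toLinearMap

lemma eval_dh (f : Pol) (t : ℝ) : (dh f).eval t = ev f t 1 := by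
  unfold ev dh
  rw [AlgHom.toLinearMap_apply, ← MvPolynomial.coe_aeval_eq_eval, ← Polynomial.coe_aeval_eq_eval]
  simp only [RingHom.coe_coe]
  rw [← AlgHom.comp_apply]
  congr 1
  apply MvPolynomial.algHom_ext
  intro i
  fin_cases i <;> simp

lemma dh_natDegree {r : ℕ} {f : Pol} (hf : f.IsHomogeneous r) : (dh f).natDegree ≤ r := by
  unfold dh
  rw [AlgHom.toLinearMap_apply, MvPolynomial.aeval_def, MvPolynomial.eval₂_eq']
  refine Polynomial.natDegree_sum_le_of_forall_le _ _ fun d hd => ?_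
  have h := hf (MvPolynomial.mem_support_iff.1 hd)
  have h2 : d 0 + d 1 = r := by
    rw [← h]; simp [Finsupp.weight_apply, Finsupp.sum_fintype]
  simp only [Fin.prod_univ_two, Matrix.cons_val_zero, Matrix.cons_val_one]
  simp only [one_pow, mul_one]
  refine (Polynomial.natDegree_C_mul_X_pow_le _ _).trans (by omega)

/-- The space of invariants. -/
noncomputable def W (r : ℕ) : Submodule ℝ Pol where
  carrier := {f | f.IsHomogeneous r ∧ (∀ x y, ev f y x = ev f x y) ∧
    (∀ x y, ev f x (-x - y) = ev f x y)}
  add_mem' := by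
    rintro f g ⟨h1, h2, h3⟩ ⟨h4, h5, h6⟩
    refine ⟨h1.add h4, fun x y => ?_, fun x y => ?_⟩
    · simp [h2 x y, h5 x y]
    · simp [h3 x y, h6 x y]
  zero_mem' := ⟨isHomogeneous_zero _ _ _, by simp [ev], by simp [ev]⟩
  smul_mem' := by
    rintro c f ⟨h1, h2, h3⟩
    refine ⟨(homogeneousSubmodule (Fin 2) ℝ r).smul_mem c h1, fun x y => ?_, fun x y => ?_⟩
    · simp [h2 x y]
    · simp [h3 x y]

lemma dh_eq_zero {r : ℕ} {f : Pol} (hf : f.IsHomogeneous r) (h : dh f = 0) : f = 0 := by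
  have : f * X 1 = 0 := by
    apply ev_ext
    intro x y
    have e : ev (f * X 1) x y = ev f x y * y := by simp [ev]
    rw [e]
    by_cases hy : y = 0
    · simp [hy, ev]
    · have := ev_hom hf y (x / y) 1
      rw [mul_div_cancel₀ _ hy, mul_one, ← eval_dh, h] at this
      rw [this]; simp [ev]
  rcases mul_eq_zero.1 this with h | h
  · exact h
  · exact absurd h (MvPolynomial.X_ne_zero _)

lemma dh_reflect {r : ℕ} {f : Pol} (hf : f ∈ W r) :
    Polynomial.reflect r (dh f) = dh f := by
  apply Polynomial.eq_of_infinite_eval_eq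
  refine Set.Infinite.mono (s := Set.Ioi (0:ℝ)) ?_ (Set.Ioi_infinite 0)
  intro t ht
  have ht : (0:ℝ) < t := ht
  have htne : t⁻¹ ≠ 0 := by positivity
  let _ : Invertible (t⁻¹) := invertibleOfNonzero htne
  have h := Polynomial.eval₂_reflect_mul_pow (RingHom.id ℝ) (t⁻¹) r (dh f) (dh_natDegree hf.1)
  rw [invOf_eq_inv, inv_inv] at h
  change Polynomial.eval t _ * _ = Polynomial.eval t⁻¹ _ at h
  rw [eval_dh f t⁻¹] at h
  have h2 := ev_hom hf.1 t⁻¹ 1 t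
  rw [mul_one, inv_mul_cancel₀ ht.ne', hf.2.1 t 1, ← eval_dh f t] at h2
  rw [h2, mul_comm] at h
  exact mul_left_cancel₀ (pow_ne_zero _ htne) h

lemma dh_even {r k : ℕ} (hr : Even r) {f : Pol} (hf : f ∈ W r) (g : Polynomial ℝ)
    (hg : dh f = Polynomial.X ^ k * g) (h0 : g.eval 0 ≠ 0) : Even k := by
  by_contra hk
  rw [Nat.not_even_iff_odd] at hk
  have key : ∀ t : ℝ, t ≠ 0 → 1 + t ≠ 0 →
      g.eval t = - ((1 + t) ^ r * (1 / (1 + t)) ^ k * g.eval (-(t / (1 + t)))) := by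
    intro t ht ht1
    have e1 : ev f t 1 = t ^ k * g.eval t := by rw [← eval_dh, hg]; simp
    have e2 : ev f (-(t / (1 + t))) 1 = (-(t / (1 + t))) ^ k * g.eval (-(t / (1 + t))) := by
      rw [← eval_dh, hg]; simp
    have e3 := hf.2.2 t 1
    have e4 := ev_hom hf.1 (-(1 + t)) (-(t / (1 + t))) 1
    rw [hr.neg_pow, e2, show -(1 + t) * -(t / (1 + t)) = t by field_simp,
      show -(1 + t) * 1 = -t - 1 by ring, e3, e1, hk.neg_pow] at e4
    apply mul_left_cancel₀ (pow_ne_zero k ht)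
    rw [e4, div_eq_mul_one_div, mul_pow]
    ring
  have c1 : ContinuousAt (fun t : ℝ => g.eval t) 0 := g.continuous.continuousAt
  have c2 : ContinuousAt (fun t : ℝ =>
      - ((1 + t) ^ r * (1 / (1 + t)) ^ k * g.eval (-(t / (1 + t))))) 0 := by
    have hd : ContinuousAt (fun t : ℝ => t / (1 + t)) 0 :=
      continuousAt_id.div (by fun_prop) (by simp)
    have hd1 : ContinuousAt (fun t : ℝ => 1 / (1 + t)) 0 :=
      continuousAt_const.div (by fun_prop) (by simp)
    have hd2 : ContinuousAt (fun t : ℝ => g.eval (-(t / (1 + t)))) 0 :=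
      ContinuousAt.comp (g := fun s : ℝ => g.eval s) g.continuous.continuousAt hd.neg
    have h3 : ContinuousAt (fun t : ℝ => (1 + t) ^ r) 0 := by fun_prop
    exact ((h3.mul (hd1.pow k)).mul hd2).neg
  have t1 := c1.tendsto.mono_left (nhdsWithin_le_nhds (s := {0}ᶜ))
  have t2 := c2.tendsto.mono_left (nhdsWithin_le_nhds (s := {0}ᶜ))
  have hne : ∀ᶠ t : ℝ in nhds 0, 1 + t ≠ 0 := by
    have : ContinuousAt (fun t : ℝ => 1 + t) 0 := by fun_prop
    exact this.eventually_ne (by simp)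
  have heq : (fun t : ℝ => g.eval t) =ᶠ[nhdsWithin 0 {0}ᶜ] (fun t : ℝ =>
      - ((1 + t) ^ r * (1 / (1 + t)) ^ k * g.eval (-(t / (1 + t))))) := by
    filter_upwards [self_mem_nhdsWithin, nhdsWithin_le_nhds hne] with t h1 h2
    exact key t h1 h2
  have := tendsto_nhds_unique (t1.congr' heq) t2
  simp at this
  apply h0
  linarith

/-- Selected coefficients. -/
noncomputable def cf (r : ℕ) : W r →ₗ[ℝ] (Fin (r / 6 + 1) → ℝ) :=
  LinearMap.pi fun i => (Polynomial.lcoeff ℝ (2 * (i : ℕ))) ∘ₗ dh ∘ₗ (W r).subtype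

lemma cf_inj {r : ℕ} (hr : Even r) : Function.Injective (cf r) := by
  rw [← LinearMap.ker_eq_bot, LinearMap.ker_eq_bot']
  rintro ⟨f, hf⟩ h
  have hc : ∀ i < r / 6 + 1, (dh f).coeff (2 * i) = 0 := by
    intro i hi
    exact congrFun h ⟨i, hi⟩
  suffices dh f = 0 by
    ext1
    exact dh_eq_zero hf.1 this
  by_contra hne
  set k := (dh f).natTrailingDegree with hk
  have hck : (dh f).coeff k ≠ 0 := Polynomial.coeff_natTrailingDegree_ne_zero.2 hne
  have hlow : ∀ i < k, (dh f).coeff i = 0 :=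
    fun i hi => Polynomial.coeff_eq_zero_of_lt_natTrailingDegree hi
  have hdeg := dh_natDegree hf.1
  have hkr : k ≤ r := (Polynomial.natTrailingDegree_le_natDegree _).trans hdeg
  obtain ⟨g, hg⟩ := Polynomial.X_pow_dvd_iff.2 hlow
  have hg0 : g.eval 0 ≠ 0 := by
    rw [← Polynomial.coeff_zero_eq_eval_zero]
    rw [hg] at hck
    simpa [Polynomial.coeff_X_pow_mul'] using hck
  obtain ⟨i, hi⟩ := dh_even hr hf g hg hg0
  have hi6 : r / 6 + 1 ≤ i := by
    by_contra hlt
    apply hck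
    rw [hi, ← two_mul]
    exact hc i (by omega)
  have hdeg2 : (dh f).natDegree ≤ r - k := by
    rw [Polynomial.natDegree_le_iff_coeff_eq_zero]
    intro j hj
    by_cases hjr : j ≤ r
    · rw [← dh_reflect hf, Polynomial.coeff_reflect, Polynomial.revAt_le hjr]
      exact hlow _ (by omega)
    · exact Polynomial.coeff_eq_zero_of_natDegree_lt (by omega)
  have hsym : (dh f).comp (-1 - Polynomial.X) = dh f := by
    apply Polynomial.funext
    intro t
    simp only [Polynomial.eval_comp, eval_dh]
    simp
    rw [← hf.2.1 t 1, ← hf.2.2 1 t, hf.2.1]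
  have hdv2 : (Polynomial.X + 1 : Polynomial ℝ) ^ k ∣ dh f := by
    refine ⟨(-1) ^ k * g.comp (-1 - Polynomial.X), ?_⟩
    conv_lhs => rw [← hsym, hg]
    simp only [Polynomial.mul_comp, Polynomial.pow_comp, Polynomial.X_comp]
    rw [← mul_assoc, ← mul_pow]
    ring
  have hcop : IsCoprime (Polynomial.X ^ k : Polynomial ℝ) ((Polynomial.X + 1) ^ k) :=
    IsCoprime.pow ⟨-1, 1, by ring⟩
  have hdv := hcop.mul_dvd ⟨g, hg⟩ hdv2
  have hle := Polynomial.natDegree_le_of_dvd hdv hne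
  have hm1 : (Polynomial.X ^ k : Polynomial ℝ).Monic := Polynomial.monic_X_pow k
  have hm2 : ((Polynomial.X + 1) ^ k : Polynomial ℝ).Monic :=
    (Polynomial.monic_X_add_C (1:ℝ)).pow k
  have hn2 : ((Polynomial.X + 1) ^ k : Polynomial ℝ).natDegree = k := by
    rw [Polynomial.natDegree_pow, show (Polynomial.X + 1 : Polynomial ℝ) = Polynomial.X + Polynomial.C 1 by simp,
      Polynomial.natDegree_X_add_C, mul_one]
  rw [hm1.natDegree_mul hm2, hn2, Polynomial.natDegree_X_pow] at hle
  omega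

lemma W_fin {r : ℕ} (hr : Even r) : FiniteDimensional ℝ (W r) :=
  FiniteDimensional.of_injective _ (cf_inj hr)

lemma W_rank {r : ℕ} (hr : Even r) : Module.finrank ℝ (W r) ≤ r / 6 + 1 := by
  simpa using LinearMap.finrank_le_finrank_of_injective (cf_inj hr)

/-- Sum over the two children. -/
noncomputable def T : Module.End ℝ Pol := sb 1 0 1 1 + sb 1 1 0 1
/-- Flip. -/
noncomputable def J : Module.End ℝ Pol := sb 1 0 0 (-1)
/-- Sum over the three edges of a triangle. -/
noncomputable def P : Module.End ℝ Pol := LinearMap.id + sb 1 0 (-1) (-1) + sb (-1) (-1) 0 1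
/-- Swap. -/
noncomputable def Sw : Module.End ℝ Pol := sb 0 1 1 0

lemma ev_T (f : Pol) (x y : ℝ) : ev (T f) x y = ev f x (x + y) + ev f (x + y) y := by
  simp [T]
lemma ev_J (f : Pol) (x y : ℝ) : ev (J f) x y = ev f x (-y) := by
  simp [J]
lemma ev_P (f : Pol) (x y : ℝ) :
    ev (P f) x y = ev f x y + ev f x (-x - y) + ev f (-x - y) y := by
  simp [P]; ring_nf
lemma ev_Sw (f : Pol) (x y : ℝ) : ev (Sw f) x y = ev f y x := by
  simp [Sw]

/-- Symmetric homogeneous polynomials. -/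
def Sym (r : ℕ) (f : Pol) : Prop := f.IsHomogeneous r ∧ ∀ x y, ev f y x = ev f x y

lemma Sym.T {r : ℕ} {f : Pol} (h : Sym r f) : Sym r (T f) := by
  refine ⟨(sb_hom h.1 _ _ _ _).add (sb_hom h.1 _ _ _ _), fun x y => ?_⟩
  rw [ev_T, ev_T, h.2 (x + y) x, h.2 y (x + y), add_comm y x, add_comm]

lemma Sym.J {r : ℕ} (hr : Even r) {f : Pol} (h : Sym r f) : Sym r (J f) := by
  refine ⟨sb_hom h.1 _ _ _ _, fun x y => ?_⟩
  rw [ev_J, ev_J, ← ev_neg hr h.1, neg_neg, h.2]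

lemma Sym.P {r : ℕ} {f : Pol} (h : Sym r f) : P f ∈ W r := by
  refine ⟨(h.1.add (sb_hom h.1 _ _ _ _)).add (sb_hom h.1 _ _ _ _), fun x y => ?_, fun x y => ?_⟩
  · rw [ev_P, ev_P, h.2 x y, h.2 (-y - x) y, h.2 x (-y - x), show -y - x = -x - y by ring]
    ring
  · rw [ev_P, ev_P, h.2 (-x - y) (-x - (-x - y)), show -x - (-x - y) = y by ring]
    ring

lemma W_sym {r : ℕ} {f : Pol} (h : f ∈ W r) : Sym r f := ⟨h.1, h.2.1⟩

lemma JJ (f : Pol) : J (J f) = f := by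
  apply ev_ext; intro x y; simp [ev_J]

lemma T_eq {r : ℕ} (hr : Even r) {f : Pol} (h : f.IsHomogeneous r) : T f = P (J f) - J f := by
  apply ev_ext
  intro x y
  rw [ev_sub, ev_T, ev_P, ev_J, ev_J, ev_J, ← ev_neg hr h (-x - y) (-y)]
  ring_nf

lemma P_W {r : ℕ} {f : Pol} (h : f ∈ W r) : P f = (3 : ℝ) • f := by
  apply ev_ext
  intro x y
  rw [ev_P, ev_smul, h.2.2, h.2.1 y (-x - y), show -x - y = -y - x by ring, h.2.2, h.2.1 x y]
  ring

lemma T_J {r : ℕ} (hr : Even r) {f : Pol} (h : f ∈ W r) : T (J f) = (2 : ℝ) • f := by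
  have hJ : (J f).IsHomogeneous r := sb_hom h.1 _ _ _ _
  rw [T_eq hr hJ, JJ, P_W h]
  module

/-- The vertex adjacency operator. -/
noncomputable def M {r : ℕ} (hr : Even r) : Module.End ℝ (W r) :=
  (P * J).restrict (fun _ hf => ((W_sym hf).J hr).P)

lemma M_coe {r : ℕ} (hr : Even r) (w : W r) : ((M hr w : W r) : Pol) = P (J w) := rfl

lemma rel1 {r : ℕ} (hr : Even r) (w : W r) :
    T (T (w : Pol)) + (2 : ℝ) • (w : Pol) = T (M hr w : W r) := by
  have h : T (w : Pol) = (M hr w : W r) - J w := T_eq hr w.2.1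
  rw [h, map_sub, T_J hr w.2]
  module

lemma rel2 {r : ℕ} (hr : Even r) (w : W r) :
    T (T (J (w : Pol))) + (2 : ℝ) • J (w : Pol) = T (J (M hr w : W r)) := by
  have h : T (w : Pol) = (M hr w : W r) - J w := T_eq hr w.2.1
  rw [T_J hr w.2, T_J hr (M hr w).2, map_smul, h]
  module

/-- The lifted polynomial. -/
noncomputable def lift (p : Polynomial ℝ) (d : ℕ) : Polynomial ℝ :=
  ∑ i ∈ Finset.range (d + 1),
    Polynomial.C (p.coeff i) * (Polynomial.X ^ (d - i) * (Polynomial.X ^ 2 + Polynomial.C 2) ^ i)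

lemma natDegree_quad (i : ℕ) :
    ((Polynomial.X ^ 2 + Polynomial.C 2 : Polynomial ℝ) ^ i).natDegree = 2 * i := by
  rw [Polynomial.natDegree_pow, Polynomial.natDegree_X_pow_add_C, mul_comm]

lemma lift_term (p : Polynomial ℝ) (d i : ℕ) (hi : i ≤ d) :
    (Polynomial.C (p.coeff i) * (Polynomial.X ^ (d - i) *
      (Polynomial.X ^ 2 + Polynomial.C 2) ^ i)).natDegree ≤ d + i := by
  refine (Polynomial.natDegree_C_mul_le _ _).trans ?_
  refine Polynomial.natDegree_mul_le.trans ?_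
  rw [natDegree_quad, Polynomial.natDegree_X_pow]
  omega

lemma lift_natDegree (p : Polynomial ℝ) (d : ℕ) : (lift p d).natDegree ≤ 2 * d := by
  refine Polynomial.natDegree_sum_le_of_forall_le _ _ fun i hi => ?_
  have := Finset.mem_range.1 hi
  exact (lift_term p d i (by omega)).trans (by omega)

lemma lift_coeff (p : Polynomial ℝ) (d : ℕ) (hp : p.coeff d = 1) :
    (lift p d).coeff (2 * d) = 1 := by
  unfold lift
  rw [Finset.sum_range_succ, Polynomial.coeff_add, Polynomial.finsetSum_coeff,
    Finset.sum_eq_zero, hp]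
  · have hm : ((Polynomial.X ^ 2 + Polynomial.C 2 : Polynomial ℝ) ^ d).Monic :=
      (Polynomial.monic_X_pow_add_C 2 (by norm_num)).pow d
    have := hm.coeff_natDegree
    rw [natDegree_quad] at this
    simpa using this
  · intro i hi
    have := Finset.mem_range.1 hi
    exact Polynomial.coeff_eq_zero_of_natDegree_lt
      ((lift_term p d i (by omega)).trans_lt (by omega))

lemma lift_kills {E F : Type*} [AddCommGroup E] [Module ℝ E] [AddCommGroup F] [Module ℝ F]
    (T : Module.End ℝ E) (M : Module.End ℝ F) (ι : F →ₗ[ℝ] E)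
    (h : ∀ w, T (T (ι w)) + (2 : ℝ) • ι w = T (ι (M w)))
    (p : Polynomial ℝ) (d : ℕ) (hd : p.natDegree ≤ d) (hp : Polynomial.aeval M p = 0) (w : F) :
    Polynomial.aeval T (lift p d) (ι w) = 0 := by
  have hpow : ∀ (i : ℕ) (w : F), (((T ^ 2 + algebraMap ℝ (Module.End ℝ E) 2) ^ i) (ι w)) =
      (T ^ i) (ι ((M ^ i) w)) := by
    intro i
    induction i with
    | zero => intro w; simp
    | succ i ih =>
      intro w
      have hc : Commute ((T ^ 2 + algebraMap ℝ (Module.End ℝ E) 2) ^ i) T := by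
        apply Commute.pow_left
        exact ((Commute.refl T).pow_left 2).add_left (Algebra.commutes _ _)
      have h1 : (T ^ 2 + algebraMap ℝ (Module.End ℝ E) 2) (ι w) = T (ι (M w)) := by
        rw [← h w, pow_two]; rfl
      rw [pow_succ, Module.End.mul_apply, h1, ← Module.End.mul_apply, hc.eq, Module.End.mul_apply,
        ih, pow_succ', pow_succ M]
      rfl
  have hp' : ∑ i ∈ Finset.range (d + 1), p.coeff i • (M ^ i) w = 0 := by
    have := congrArg (fun L : Module.End ℝ F => L w) hp
    rw [Polynomial.aeval_eq_sum_range' (n := d + 1) (by omega)] at this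
    simpa using this
  have : Polynomial.aeval T (lift p d) (ι w) =
      (T ^ d) (ι (∑ i ∈ Finset.range (d + 1), p.coeff i • (M ^ i) w)) := by
    unfold lift
    rw [map_sum, map_sum, map_sum, LinearMap.sum_apply]
    refine Finset.sum_congr rfl fun i hi => ?_
    have hi' := Finset.mem_range.1 hi
    simp only [map_mul, map_pow, map_add, Polynomial.aeval_X, Polynomial.aeval_C, map_smul]
    rw [Module.End.mul_apply, Module.End.mul_apply, hpow, Module.algebraMap_end_apply,
      ← Module.End.mul_apply, ← pow_add, Nat.sub_add_cancel (by omega)]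
  rw [this, hp', map_zero, map_zero]

lemma exists_q {r : ℕ} (hr : Even r) : ∃ q : Polynomial ℝ,
    q.natDegree ≤ 2 * (r / 6 + 1) ∧ q.coeff (2 * (r / 6 + 1)) = 1 ∧
    ∀ f, Sym r f → Polynomial.aeval T q (T (T f)) = Polynomial.aeval T q f := by
  have := W_fin hr
  set d := r / 6 + 1 with hd
  have hrk : Module.finrank ℝ (W r) ≤ d := W_rank hr
  set p : Polynomial ℝ := (M hr).charpoly * Polynomial.X ^ (d - Module.finrank ℝ (W r)) with hp
  have hpm : p.Monic := (LinearMap.charpoly_monic _).mul (Polynomial.monic_X_pow _)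
  have hpd : p.natDegree = d := by
    rw [hp, (LinearMap.charpoly_monic _).natDegree_mul (Polynomial.monic_X_pow _),
      LinearMap.charpoly_natDegree, Polynomial.natDegree_X_pow]
    omega
  have hp0 : Polynomial.aeval (M hr) p = 0 := by
    rw [hp, map_mul, LinearMap.aeval_self_charpoly, zero_mul]
  refine ⟨lift p d, lift_natDegree p d, lift_coeff p d ?_, fun f hf => ?_⟩
  · rw [← hpd]; exact hpm
  have k1 := lift_kills T (M hr) (W r).subtype (rel1 hr) p d hpd.le hp0
  have k2 := lift_kills T (M hr) (J ∘ₗ (W r).subtype) (rel2 hr) p d hpd.le hp0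
  have hw1 : P (J (T f)) ∈ W r := (hf.T.J hr).P
  have hw2 : P (J f) ∈ W r := (hf.J hr).P
  have e : T (T f) = f + P (J (T f)) - J (P (J f)) := by
    rw [T_eq hr hf.T.1]
    have : J (T f) = J (P (J f)) - f := by rw [T_eq hr hf.1, map_sub, JJ]
    conv_lhs => rw [sub_eq_add_neg, this, ← this]
    rw [this]
    abel
  have e1 := k1 ⟨_, hw1⟩
  have e2 := k2 ⟨_, hw2⟩
  simp only [LinearMap.comp_apply, Submodule.subtype_apply] at e1 e2
  rw [e, map_sub, map_add, e1, e2]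
  simp

lemma stern_even (n : ℕ) (hn : 1 ≤ n) (k : ℤ) : stern (n + 1) (2 * k) = stern n k := by
  obtain ⟨m, rfl⟩ : ∃ m, n = m + 1 := ⟨n - 1, by omega⟩
  rw [stern, if_pos (by omega)]
  congr 1; omega

lemma stern_odd (n : ℕ) (hn : 1 ≤ n) (k : ℤ) :
    stern (n + 1) (2 * k + 1) = stern n k + stern n (k + 1) := by
  obtain ⟨m, rfl⟩ : ∃ m, n = m + 1 := ⟨n - 1, by omega⟩
  rw [stern, if_neg (by omega)]
  congr 2 <;> omega

lemma S_succ (n : ℕ) (hn : 1 ≤ n) (f : Pol) : S (n + 1) f = S n (T f) := by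
  have key : ∀ N : ℕ, ∑ k ∈ Finset.range (2 * N),
      ev f (stern (n + 1) (k : ℤ)) (stern (n + 1) ((k : ℤ) + 1)) =
      ∑ k ∈ Finset.range N, ev (T f) (stern n (k : ℤ)) (stern n ((k : ℤ) + 1)) := by
    intro N
    induction N with
    | zero => simp
    | succ N ih =>
      rw [show 2 * (N + 1) = 2 * N + 1 + 1 by ring, Finset.sum_range_succ, Finset.sum_range_succ,
        Finset.sum_range_succ, ih, ev_T]
      push_cast
      rw [stern_even n hn, stern_odd n hn,
        show (2 * (N : ℤ) + 1 + 1) = 2 * ((N : ℤ) + 1) by ring, stern_even n hn]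
      push_cast
      ring
  have := key (2 ^ n)
  rw [← pow_succ'] at this
  exact this

lemma S_one (f : Pol) : S 1 f = ev f 0 1 + ev f 1 0 := by
  simp [S, Finset.sum_range_succ, stern, ev]

/-- The terminal functional. -/
noncomputable def Phi : Pol →ₗ[ℝ] ℝ where
  toFun f := ev f 0 1 + ev f 1 0
  map_add' f g := by simp; ring
  map_smul' c g := by simp; ring

lemma S_eq (n : ℕ) (f : Pol) : S (n + 1) f = Phi ((T ^ n) f) := by
  induction n generalizing f with
  | zero => exact S_one f
  | succ n ih =>
    rw [S_succ _ (by omega), ih, pow_succ]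
    rfl

lemma S_swap (n : ℕ) (f : Pol) : S (n + 1) (Sw f) = S (n + 1) f := by
  induction n generalizing f with
  | zero =>
    rw [zero_add, S_one, S_one, ev_Sw, ev_Sw]
    ring
  | succ n ih =>
    rw [S_succ (n + 1) (by omega), S_succ (n + 1) (by omega) f, ← ih (T f)]
    congr 1
    apply ev_ext
    intro x y
    simp only [ev_T, ev_Sw]
    rw [add_comm y x, add_comm]

lemma S_symm (n : ℕ) (f : Pol) :
    S (n + 1) f = S (n + 1) ((1 / 2 : ℝ) • (f + Sw f)) := by
  have := S_swap n f
  rw [S_eq n (_ • _), map_smul, map_smul, map_add, map_add, ← S_eq, ← S_eq, this, smul_eq_mul]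
  ring

lemma symm_sym {r : ℕ} {f : Pol} (hf : f.IsHomogeneous r) :
    Sym r ((1 / 2 : ℝ) • (f + Sw f)) := by
  refine ⟨(homogeneousSubmodule (Fin 2) ℝ r).smul_mem _ (hf.add (sb_hom hf _ _ _ _)),
    fun x y => ?_⟩
  simp only [ev_smul, ev_add, ev_Sw]
  ring

lemma main_sym {r : ℕ} (hr : Even r) : ∃ a : ℕ → ℝ, ∀ f, Sym r f → ∃ b c : ℝ,
    ∀ n, 2 * (r / 6 + 1) + 1 ≤ n →
      S n f = (∑ j ∈ Finset.Icc 1 (2 * (r / 6 + 1)), a j * S (n - j) f) + b + c * (-1 : ℝ) ^ n := by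
  obtain ⟨q, hq1, hq2, hq⟩ := exists_q hr
  set l := 2 * (r / 6 + 1) with hl
  refine ⟨fun j => - q.coeff (l - j), fun f hf => ?_⟩
  have hu : ∀ m, S (m + l + 1) f =
      (∑ j ∈ Finset.Icc 1 l, (- q.coeff (l - j)) * S (m + l + 1 - j) f) +
      Phi ((T ^ m) (Polynomial.aeval T q f)) := by
    intro m
    have e1 : Phi ((T ^ m) (Polynomial.aeval T q f)) =
        ∑ i ∈ Finset.range (l + 1), q.coeff i * S (m + i + 1) f := by
      rw [Polynomial.aeval_eq_sum_range' (n := l + 1) (by omega), LinearMap.sum_apply, map_sum,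
        map_sum]
      refine Finset.sum_congr rfl fun i _ => ?_
      rw [LinearMap.smul_apply, map_smul, map_smul, S_eq, pow_add]
      rfl
    rw [e1, ← Finset.sum_range_reflect, Finset.sum_range_succ', Finset.range_eq_Ico,
      ← Finset.Ico_add_one_right_eq_Icc]
    have e2 := Finset.sum_Ico_add' (fun j => -q.coeff (l - j) * S (m + l + 1 - j) f) 0 l 1
    rw [zero_add] at e2
    rw [← e2]
    have e3 : ∑ x ∈ Finset.Ico 0 l, -q.coeff (l - (x + 1)) * S (m + l + 1 - (x + 1)) f =
        - ∑ x ∈ Finset.Ico 0 l,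
          q.coeff (l + 1 - 1 - (x + 1)) * S (m + (l + 1 - 1 - (x + 1)) + 1) f := by
      rw [← Finset.sum_neg_distrib]
      refine Finset.sum_congr rfl fun x hx => ?_
      have := (Finset.mem_Ico.1 hx).2
      rw [neg_mul, show m + (l + 1 - 1 - (x + 1)) + 1 = m + l + 1 - (x + 1) by omega]
      rfl
    rw [e3]
    simp only [Nat.add_sub_cancel, Nat.sub_zero, hq2]
    ring
  set v : ℕ → ℝ := fun m => Phi ((T ^ m) (Polynomial.aeval T q f)) with hv
  have hper : ∀ m, v (m + 2) = v m := by
    intro m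
    have hc : (T ^ 2) (Polynomial.aeval T q f) = Polynomial.aeval T q f := by
      have : T ^ 2 * Polynomial.aeval T q = Polynomial.aeval T q * T ^ 2 := by
        have h2 : T ^ 2 = Polynomial.aeval T (Polynomial.X ^ 2 : Polynomial ℝ) := by simp
        rw [h2, ← map_mul, ← map_mul, mul_comm]
      rw [← Module.End.mul_apply, this, Module.End.mul_apply, pow_two]
      exact hq f hf
    simp only [hv]
    rw [pow_add, Module.End.mul_apply, hc]
  have hv2 : ∀ m, v m = (v 0 + v 1) / 2 + (v 0 - v 1) / 2 * (-1) ^ m := by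
    intro m
    induction m using Nat.twoStepInduction with
    | zero => ring
    | one => ring
    | more m h1 _ => rw [hper, h1, pow_add]; ring
  refine ⟨(v 0 + v 1) / 2, (v 0 - v 1) / 2 * (-1) ^ (l + 1), fun n hn => ?_⟩
  obtain ⟨m, rfl⟩ : ∃ m, n = m + l + 1 := ⟨n - (l + 1), by omega⟩
  have h1 := hu m
  change _ = _ + v m at h1
  have hs : ((-1 : ℝ) ^ (l + 1)) * (-1) ^ (m + l + 1) = (-1) ^ m := by
    rw [← pow_add, show l + 1 + (m + l + 1) = m + 2 * (l + 1) by ring, pow_add, pow_mul]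
    simp
  rw [h1, hv2 m, mul_assoc _ _ ((-1 : ℝ) ^ (m + l + 1)), hs]
  ring

end SternProof

/-- For even `r`, with `ℓ = (r+6)/3` if `r ≡ 0 (mod 6)`, `ℓ = (r+4)/3` if
`r ≡ 2 (mod 6)`, `ℓ = (r+2)/3` if `r ≡ 4 (mod 6)`, there exist reals `a_1, …, a_ℓ`
(depending only on `r`) and `N` such that for every homogeneous polynomial `f` of
degree `r` there are constants `b`, `c` (depending on `f`) with
`S n f = ∑_{j=1}^{ℓ} a_j S (n-j) f + b + c (-1)^n` for all `n ≥ N`. -/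
theorem S_inhomogeneous_recurrence_even (r : ℕ) (hr : Even r) (ℓ : ℕ)
    (hℓ : (r % 6 = 0 ∧ ℓ = (r + 6) / 3) ∨ (r % 6 = 2 ∧ ℓ = (r + 4) / 3) ∨
      (r % 6 = 4 ∧ ℓ = (r + 2) / 3)) :
    ∃ (a : ℕ → ℝ) (N : ℕ), ∀ f : MvPolynomial (Fin 2) ℝ, f.IsHomogeneous r →
      ∃ b c : ℝ, ∀ n : ℕ, N ≤ n →
        S n f = (∑ j ∈ Finset.Icc 1 ℓ, a j * S (n - j) f) + b + c * (-1 : ℝ) ^ n := by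
  have hl : ℓ = 2 * (r / 6 + 1) := by omega
  subst hl
  obtain ⟨a, ha⟩ := SternProof.main_sym hr
  refine ⟨a, 2 * (r / 6 + 1) + 1, fun f hf => ?_⟩
  obtain ⟨b, c, h⟩ := ha _ (SternProof.symm_sym hf)
  have hS : ∀ n, 1 ≤ n → S n f = S n ((1 / 2 : ℝ) • (f + SternProof.Sw f)) := by
    intro n hn
    obtain ⟨m, rfl⟩ : ∃ m, n = m + 1 := ⟨n - 1, by omega⟩
    exact SternProof.S_symm m f
  refine ⟨b, c, fun n hn => ?_⟩
  rw [hS n (by omega), h n hn]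
  congr 2
  refine Finset.sum_congr rfl fun j hj => ?_
  have := (Finset.mem_Icc.1 hj).2
  rw [hS (n - j) (by omega)]
end
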